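/- Let (X, σ_X) and (Y, σ_Y) be one-sided subshifts over finite alphabets, with Y a factor of X via a one-block factor map π : X → Y. Let Φ = (log φ_n)_{n=1}^∞ ∈ C_sa(X, σ_X) be generated by a sub-multiplicative φ : L(X) → [0,∞), and let ν ∈ M(Y, σ_Y). Define ψ : L(Y) → [0,∞) by ψ(J) = Σ_{I ∈ L(X), |I| = |J|, πI = J} φ(I). Then ψ is sub-multiplicative, and with Ψ ∈ C_sa(Y, σ_Y) the potential generated by ψ, one has sup{ Φ_*(μ) + h_μ(σ_X) − h_ν(σ_Y) : μ ∈ M(X, σ_X), μ ∘ π^{-1} = ν } = Ψ_*(ν). -/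

import Mathlib

open MeasureTheory Filter Topology
open scoped Classical ENNReal NNReal

noncomputable section

/-- The left shift on one-sided sequences. -/
def shiftMap {A : Type} : (ℕ → A) → (ℕ → A) := fun x n => x (n + 1)

/-- The cylinder set of a finite word. -/
def cyl {A : Type} (I : List A) : Set (ℕ → A) :=
  {x | ∀ i : Fin I.length, x i = I.get i}

/-- Membership of a word in the language of `X`. -/
def Lang {A : Type} (X : Set (ℕ → A)) (I : List A) : Prop :=
  (cyl I ∩ X).Nonempty

/-- `X` is a (nonempty) one-sided subshift. -/
def IsSubshift {A : Type} [TopologicalSpace A] (X : Set (ℕ → A)) : Prop :=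
  X.Nonempty ∧ IsCompact X ∧ shiftMap '' X ⊆ X

/-- weak `p`-specification -/
def WeakSpecification {A : Type} (X : Set (ℕ → A)) (p : ℕ) : Prop :=
  ∀ I J : List A, Lang X I → Lang X J →
    ∃ K : List A, K.length ≤ p ∧ Lang X (I ++ K ++ J)

/-- `p`-specification -/
def Specification {A : Type} (X : Set (ℕ → A)) (p : ℕ) : Prop :=
  ∀ I J : List A, Lang X I → Lang X J →
    ∃ K : List A, K.length = p ∧ Lang X (I ++ K ++ J)

/-- invariant probability measures supported on `X` (predicate on plain measures) -/
def InvOn {A : Type} [MeasurableSpace A] (X : Set (ℕ → A)) (μ : Measure (ℕ → A)) : Prop :=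
  IsProbabilityMeasure μ ∧ μ.map shiftMap = μ ∧ μ X = 1

/-- the set of shift-invariant probability measures on `X` -/
def MInv {A : Type} [MeasurableSpace A] (X : Set (ℕ → A)) :
    Set (ProbabilityMeasure (ℕ → A)) :=
  {μ | (μ : Measure (ℕ → A)).map shiftMap = (μ : Measure (ℕ → A)) ∧
    (μ : Measure (ℕ → A)) X = 1}

/-- measure of a word: `μ([I] ∩ X)` -/
def mw {A : Type} [MeasurableSpace A] (X : Set (ℕ → A)) (μ : Measure (ℕ → A))
    (I : List A) : ℝ :=
  (μ (cyl I ∩ X)).toReal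

/-- the initial word of length `n` of a sequence -/
def wordOf {A : Type} (x : ℕ → A) (n : ℕ) : List A := List.ofFn (fun i : Fin n => x i)

/-- `n`-block entropy -/
def Hblock {A : Type} [Fintype A] [MeasurableSpace A] (X : Set (ℕ → A))
    (μ : Measure (ℕ → A)) (n : ℕ) : ℝ :=
  -∑ w : Fin n → A, mw X μ (List.ofFn w) * Real.log (mw X μ (List.ofFn w))

/-- measure-theoretic entropy (the limit exists for invariant measures; `liminf` realizes it) -/
def ent {A : Type} [Fintype A] [MeasurableSpace A] (X : Set (ℕ → A))
    (μ : Measure (ℕ → A)) : ℝ :=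
  liminf (fun n : ℕ => Hblock X μ n / n) atTop

/-- extended logarithm: `log t`, with value `⊥` for `t ≤ 0` -/
def elog (t : ℝ) : EReal := if t ≤ 0 then ⊥ else ((Real.log t : ℝ) : EReal)

/-- the integral `∫ log g dμ`, valued in `ℝ ∪ {−∞}` -/
def intlog {Ω : Type*} [MeasurableSpace Ω] (μ : Measure Ω) (g : Ω → ℝ) : EReal :=
  ((∫⁻ x, ENNReal.ofReal (Real.log (g x)) ∂μ : ℝ≥0∞) : EReal) -
    ((∫⁻ x, (if g x ≤ 0 then (⊤ : ℝ≥0∞) else ENNReal.ofReal (-Real.log (g x))) ∂μ : ℝ≥0∞) : EReal)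

/-- sub-additive potential `Φ = (log φ_n)_{n ≥ 1}` -/
def SubaddPot {A : Type} [TopologicalSpace A] (X : Set (ℕ → A))
    (φ : ℕ → (ℕ → A) → ℝ) : Prop :=
  (∀ n, 1 ≤ n → ContinuousOn (φ n) X) ∧
  (∀ n, 1 ≤ n → ∀ x ∈ X, 0 ≤ φ n x) ∧
  ∃ c > (0:ℝ), ∀ n m : ℕ, 1 ≤ n → 1 ≤ m → ∀ x ∈ X,
    φ (n + m) x ≤ c * φ n x * φ m (shiftMap^[n] x)

/-- `Φ_*(μ) = lim (1/n) ∫ log φ_n dμ` (realized as a `liminf` in `EReal`) -/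
def PhiStar {A : Type} [MeasurableSpace A] (μ : Measure (ℕ → A))
    (φ : ℕ → (ℕ → A) → ℝ) : EReal :=
  liminf (fun n : ℕ => (((n : ℝ)⁻¹ : ℝ) : EReal) * intlog μ (φ n)) atTop

/-- sub-multiplicative function on the language of `X` -/
def Submult {A : Type} (X : Set (ℕ → A)) (φ : List A → ℝ) : Prop :=
  (∀ I, Lang X I → 0 ≤ φ I) ∧ φ [] = 1 ∧
  ∃ c > (0:ℝ), ∀ I J : List A, Lang X (I ++ J) → φ (I ++ J) ≤ c⁻¹ * φ I * φ J

/-- the potential generated by a word function -/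
def genPot {A : Type} (φ : List A → ℝ) : ℕ → (ℕ → A) → ℝ := fun n x => φ (wordOf x n)

/-- the scaled potential `cΦ = (log φ_n^c)` -/
def scPot {Ω : Type*} (c : ℝ) (φ : ℕ → Ω → ℝ) : ℕ → Ω → ℝ := fun n x => φ n x ^ c

/-- the "pressure value" `Φ_*(μ) + h_μ` -/
def eqVal {A : Type} [Fintype A] [MeasurableSpace A] (X : Set (ℕ → A))
    (φ : ℕ → (ℕ → A) → ℝ) (μ : ProbabilityMeasure (ℕ → A)) : EReal :=
  PhiStar (μ : Measure (ℕ → A)) φ + ((ent X (μ : Measure (ℕ → A)) : ℝ) : EReal)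

/-- the set of equilibrium states of `Φ` -/
def EqSet {A : Type} [Fintype A] [MeasurableSpace A] (X : Set (ℕ → A))
    (φ : ℕ → (ℕ → A) → ℝ) : Set (ProbabilityMeasure (ℕ → A)) :=
  {μ | μ ∈ MInv X ∧ eqVal X φ μ = ⨆ η ∈ MInv X, eqVal X φ η}

/-- sequence map induced by a one-block map -/
def blockMap {A B : Type} (π : A → B) : (ℕ → A) → (ℕ → B) := fun x n => π (x n)

/-- pushforward of a probability measure under a one-block map -/
def pushM {A B : Type} [MeasurableSpace A] [MeasurableSpace B] (π : A → B)
    (μ : ProbabilityMeasure (ℕ → A)) : Measure (ℕ → B) :=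
  (μ : Measure (ℕ → A)).map (blockMap π)

/-- conditional equilibrium states of `Φ` over `ν` -/
def CondEqSet {A B : Type} [Fintype A] [MeasurableSpace A] [MeasurableSpace B]
    (X : Set (ℕ → A)) (π : A → B) (φ : ℕ → (ℕ → A) → ℝ) (ν : Measure (ℕ → B)) :
    Set (ProbabilityMeasure (ℕ → A)) :=
  {μ | μ ∈ MInv X ∧ pushM π μ = ν ∧
    eqVal X φ μ = ⨆ η ∈ {η | η ∈ MInv X ∧ pushM π η = ν}, eqVal X φ η}

/-- the projected word function `ψ(J) = Σ_{I : πI = J} φ(I)` -/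
def psiProj {A B : Type} [Fintype A] (X : Set (ℕ → A)) (π : A → B) (φ : List A → ℝ)
    (J : List B) : ℝ :=
  ∑ w : Fin J.length → A,
    if Lang X (List.ofFn w) ∧ List.map π (List.ofFn w) = J then φ (List.ofFn w) else 0

/-- `φ^{(2)}(J) = (Σ_{I : πI = J} φ(I)^{1/a₁})^{a₁}` -/
def phiTwo {A B : Type} [Fintype A] (X : Set (ℕ → A)) (π : A → B) (φ : List A → ℝ)
    (a₁ : ℝ) (J : List B) : ℝ :=
  (∑ w : Fin J.length → A,
    if Lang X (List.ofFn w) ∧ List.map π (List.ofFn w) = J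
    then φ (List.ofFn w) ^ a₁⁻¹ else 0) ^ a₁

/-- `a`-weighted pressure value for `k = 2` -/
def wVal2 {A B : Type} [Fintype A] [Fintype B] [MeasurableSpace A] [MeasurableSpace B]
    (X : Set (ℕ → A)) (Y : Set (ℕ → B)) (π : A → B) (φ : ℕ → (ℕ → A) → ℝ)
    (a₁ a₂ : ℝ) (μ : ProbabilityMeasure (ℕ → A)) : EReal :=
  PhiStar (μ : Measure (ℕ → A)) φ +
    ((a₁ * ent X (μ : Measure (ℕ → A)) + a₂ * ent Y (pushM π μ) : ℝ) : EReal)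

/-- the set of `a`-weighted equilibrium states, `k = 2` -/
def WEqSet2 {A B : Type} [Fintype A] [Fintype B] [MeasurableSpace A] [MeasurableSpace B]
    (X : Set (ℕ → A)) (Y : Set (ℕ → B)) (π : A → B) (φ : ℕ → (ℕ → A) → ℝ)
    (a₁ a₂ : ℝ) : Set (ProbabilityMeasure (ℕ → A)) :=
  {μ | μ ∈ MInv X ∧ wVal2 X Y π φ a₁ a₂ μ = ⨆ η ∈ MInv X, wVal2 X Y π φ a₁ a₂ η}

/-- convexity of a set of probability measures -/
def ConvexPM {Ω : Type*} [MeasurableSpace Ω] (S : Set (ProbabilityMeasure Ω)) : Prop :=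
  ∀ μ₁ ∈ S, ∀ μ₂ ∈ S, ∀ t : ℝ, 0 ≤ t → t ≤ 1 → ∀ μ : ProbabilityMeasure Ω,
    (μ : Measure Ω) = ENNReal.ofReal t • (μ₁ : Measure Ω) +
      ENNReal.ofReal (1 - t) • (μ₂ : Measure Ω) → μ ∈ S

/-- extreme points of a set of probability measures -/
def IsExtremePM {Ω : Type*} [MeasurableSpace Ω] (S : Set (ProbabilityMeasure Ω))
    (μ : ProbabilityMeasure Ω) : Prop :=
  μ ∈ S ∧ ∀ μ₁ ∈ S, ∀ μ₂ ∈ S, ∀ t : ℝ, 0 < t → t < 1 →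
    (μ : Measure Ω) = ENNReal.ofReal t • (μ₁ : Measure Ω) +
      ENNReal.ofReal (1 - t) • (μ₂ : Measure Ω) → μ₁ = μ₂

/-- the class `Ω_w(A*, p)` -/
def OmegaW {A : Type} [Fintype A] (p : ℕ) (f : List A → ℝ) : Prop :=
  (∀ I, 0 ≤ f I ∧ f I ≤ 1) ∧
  ∃ c > (0:ℝ),
    (∀ n : ℕ, ∑ w : Fin n → A, f (List.ofFn w) = 1) ∧
    (∀ I J : List A, ∃ K : List A, K.length ≤ p ∧ c * (f I * f J) ≤ f (I ++ K ++ J)) ∧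
    (∀ I : List A, ∃ i j : A, c * f I ≤ f (i :: I) ∧ c * f I ≤ f (I ++ [j]))

/-- the class `Ω(A*, p)` -/
def OmegaS {A : Type} [Fintype A] (p : ℕ) (f : List A → ℝ) : Prop :=
  (∀ I, 0 ≤ f I ∧ f I ≤ 1) ∧
  ∃ c > (0:ℝ),
    (∀ n : ℕ, ∑ w : Fin n → A, f (List.ofFn w) = 1) ∧
    (∀ I J : List A, ∃ K : List A, K.length = p ∧ c * (f I * f J) ≤ f (I ++ K ++ J))

/-- `f_{m,n}(I)` -/
def fmn {A : Type} [Fintype A] (f : List A → ℝ) (m n : ℕ) (I : List A) : ℝ :=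
  ∑ u : Fin m → A, ∑ v : Fin n → A, f (List.ofFn u ++ I ++ List.ofFn v)

/-- `f*(I) = sup_{m,n} f_{m,n}(I)` -/
def fstar {A : Type} [Fintype A] (f : List A → ℝ) (I : List A) : ℝ :=
  ⨆ m : ℕ, ⨆ n : ℕ, fmn f m n I

/-- the class `D_w(X, p)` -/
def Dw {A : Type} (X : Set (ℕ → A)) (p : ℕ) (φ : List A → ℝ) : Prop :=
  (∀ I, Lang X I → 0 ≤ φ I) ∧ (∃ I, Lang X I ∧ I ≠ [] ∧ 0 < φ I) ∧
  ∃ c : ℝ, 0 < c ∧ c ≤ 1 ∧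
    (∀ I J : List A, Lang X (I ++ J) → φ (I ++ J) ≤ c⁻¹ * φ I * φ J) ∧
    (∀ I J : List A, Lang X I → Lang X J →
      ∃ K : List A, K.length ≤ p ∧ Lang X (I ++ K ++ J) ∧
        c * (φ I * φ J) ≤ φ (I ++ K ++ J))

/-- the class `D(X, p)` -/
def Ds {A : Type} (X : Set (ℕ → A)) (p : ℕ) (φ : List A → ℝ) : Prop :=
  (∀ I, Lang X I → 0 ≤ φ I) ∧ (∃ I, Lang X I ∧ I ≠ [] ∧ 0 < φ I) ∧
  ∃ c : ℝ, 0 < c ∧ c ≤ 1 ∧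
    (∀ I J : List A, Lang X (I ++ J) → φ (I ++ J) ≤ c⁻¹ * φ I * φ J) ∧
    (∀ I J : List A, Lang X I → Lang X J →
      ∃ K : List A, K.length = p ∧ Lang X (I ++ K ++ J) ∧
        c * (φ I * φ J) ≤ φ (I ++ K ++ J))

end

noncomputable section

/-- iterated one-block maps along a chain of alphabets: `tauFrom π j i : B j → B (j+i)` -/
def tauFrom {B : ℕ → Type} (π : ∀ i, B i → B (i+1)) (j : ℕ) : (i : ℕ) → B j → B (j + i)
  | 0 => id
  | (i+1) => fun a => π (j + i) (tauFrom π j i a)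

/-- weighted pressure value along a chain starting at index `j`, with `k` weights `w 0, …, w (k-1)` -/
def wValGen {B : ℕ → Type} [∀ i, Fintype (B i)] [∀ i, MeasurableSpace (B i)]
    (π : ∀ i, B i → B (i+1)) (X : ∀ i, Set (ℕ → B i)) (j k : ℕ) (w : ℕ → ℝ)
    (φ : ℕ → (ℕ → B j) → ℝ) (μ : ProbabilityMeasure (ℕ → B j)) : EReal :=
  PhiStar (μ : Measure (ℕ → B j)) φ +
    ((∑ i ∈ Finset.range k, w i *
      ent (X (j + i)) ((μ : Measure (ℕ → B j)).map (blockMap (tauFrom π j i))) : ℝ) : EReal)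

/-- weighted equilibrium states along a chain -/
def wEqSetGen {B : ℕ → Type} [∀ i, Fintype (B i)] [∀ i, MeasurableSpace (B i)]
    (π : ∀ i, B i → B (i+1)) (X : ∀ i, Set (ℕ → B i)) (j k : ℕ) (w : ℕ → ℝ)
    (φ : ℕ → (ℕ → B j) → ℝ) : Set (ProbabilityMeasure (ℕ → B j)) :=
  {μ | μ ∈ MInv (X j) ∧
    wValGen π X j k w φ μ = ⨆ η ∈ MInv (X j), wValGen π X j k w φ η}

end

/-!
The upper bound holds at every finite level: for a finite set of words with weights `φ(I)`, entropy
plus mean of `log φ` is at most that of the image distribution with the summed weights `ψ`, by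
the log-sum inequality on each fiber of `π`. Equality holds when the mass of every fiber is
distributed proportionally to `φ`.

For the lower bound, let `η_N` be such a Gibbs lift of `ν` on words of length `N`, extended
arbitrarily, and let `μ` be a limit of its Cesàro averages under the shift. Invariance of `ν` gives
`μ ∘ π⁻¹ = ν`. Cutting `[0, N)` into blocks of length `n` in all `n` possible ways and using
sub-multiplicativity of `φ`, subadditivity and concavity of entropy, the pressure rate of
`ν` and `ψ` at length `N` is at most that of `μ` and `φ` at length `n`, up to errors that vanish as
`N → ∞` and then `n → ∞`.
-/

section FiniteEntropy

theorem negMulLog_add_mul_log_le {p q : ℝ} (hp : 0 ≤ p) (hq : 0 ≤ q) (hpq : 0 < p → 0 < q) :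
    Real.negMulLog p + p * Real.log q ≤ q - p := by
  rcases hp.eq_or_lt with rfl | hp'
  · simpa using hq
  have hlog := Real.log_le_sub_one_of_pos (div_pos (hpq hp') hp')
  rw [Real.log_div (hpq hp').ne' hp'.ne'] at hlog
  calc Real.negMulLog p + p * Real.log q = p * (Real.log q - Real.log p) := by
        rw [Real.negMulLog]; ring
    _ ≤ p * (q / p - 1) := mul_le_mul_of_nonneg_left hlog hp
    _ = q - p := by field_simp

variable {ι κ : Type*}

theorem sum_negMulLog_add_mul_log_le (s : Finset ι) {p q : ι → ℝ} (hp : ∀ i ∈ s, 0 ≤ p i)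
    (hq : ∀ i ∈ s, 0 ≤ q i) (hpq : ∀ i ∈ s, 0 < p i → 0 < q i) :
    ∑ i ∈ s, (Real.negMulLog (p i) + p i * Real.log (q i)) ≤
      Real.negMulLog (∑ i ∈ s, p i) + (∑ i ∈ s, p i) * Real.log (∑ i ∈ s, q i) := by
  set P := ∑ i ∈ s, p i with hP
  set Q := ∑ i ∈ s, q i with hQ
  rcases (Finset.sum_nonneg hp).eq_or_lt with h0 | hPpos
  · have hp0 : ∀ i ∈ s, p i = 0 := (Finset.sum_eq_zero_iff_of_nonneg hp).1 h0.symm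
    rw [hP, ← h0, Finset.sum_eq_zero fun i hi => by simp [hp0 i hi]]
    simp
  have hQpos : 0 < Q := by
    obtain ⟨i, hi, hpi⟩ := Finset.exists_lt_of_sum_lt (f := fun _ => (0 : ℝ)) (by simpa using hPpos)
    exact (hpq i hi hpi).trans_le (Finset.single_le_sum hq hi)
  -- compare `p` with `q` rescaled to the same total mass
  have hscaled : ∀ i ∈ s, Real.negMulLog (p i) + p i * Real.log (q i) +
      p i * (Real.log P - Real.log Q) ≤ q i * (P / Q) - p i := fun i hi => by
    refine le_of_eq_of_le ?_ (negMulLog_add_mul_log_le (hp i hi)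
      (mul_nonneg (hq i hi) (div_pos hPpos hQpos).le)
      fun h => mul_pos (hpq i hi h) (div_pos hPpos hQpos))
    rcases (hp i hi).eq_or_lt with h | h
    · simp [← h]
    · rw [Real.log_mul (hpq i hi h).ne' (div_pos hPpos hQpos).ne',
        Real.log_div hPpos.ne' hQpos.ne']
      ring
  have hsum := Finset.sum_le_sum hscaled
  rw [Finset.sum_add_distrib, ← Finset.sum_mul, Finset.sum_sub_distrib, ← Finset.sum_mul, ← hP,
    ← hQ, mul_div_cancel₀ _ hQpos.ne', sub_self] at hsum
  rw [Real.negMulLog]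
  linarith

theorem sum_negMulLog_add_mul_log_eq {s : Finset ι} {q : ι → ℝ} {c : ℝ}
    (hc : c ≠ 0 → ∑ i ∈ s, q i ≠ 0) :
    ∑ i ∈ s, (Real.negMulLog (q i * (c / ∑ j ∈ s, q j)) +
        q i * (c / ∑ j ∈ s, q j) * Real.log (q i)) =
      Real.negMulLog c + c * Real.log (∑ i ∈ s, q i) := by
  rcases eq_or_ne c 0 with rfl | hc0
  · simp
  have hQ := hc hc0
  have hterm : ∀ i, Real.negMulLog (q i * (c / ∑ j ∈ s, q j)) +
      q i * (c / ∑ j ∈ s, q j) * Real.log (q i) =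
        q i * ((c / ∑ j ∈ s, q j) * (Real.log (∑ j ∈ s, q j) - Real.log c)) := fun i => by
    rcases eq_or_ne (q i) 0 with h | h
    · simp [h]
    · rw [Real.negMulLog, Real.log_mul h (div_ne_zero hc0 hQ), Real.log_div hc0 hQ]
      ring
  rw [Finset.sum_congr rfl fun i _ => hterm i, ← Finset.sum_mul, ← mul_assoc,
    mul_div_cancel₀ _ hQ, Real.negMulLog]
  ring

theorem sum_mul_div_sum_eq {s : Finset ι} {q : ι → ℝ} {c : ℝ} (hc : c ≠ 0 → ∑ i ∈ s, q i ≠ 0) :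
    ∑ i ∈ s, q i * (c / ∑ j ∈ s, q j) = c := by
  rw [← Finset.sum_mul, mul_div_cancel_of_imp']
  exact fun h => by_contra fun hc0 => hc hc0 h

theorem sum_negMulLog_prod_le [Fintype ι] [Fintype κ] {r : ι → κ → ℝ} (hr : ∀ a b, 0 ≤ r a b)
    (hsum : ∑ a, ∑ b, r a b = 1) :
    ∑ a, ∑ b, Real.negMulLog (r a b) ≤
      ∑ a, Real.negMulLog (∑ b, r a b) + ∑ b, Real.negMulLog (∑ a, r a b) := by
  have hcol : ∀ b, 0 ≤ ∑ a, r a b := fun b => Finset.sum_nonneg fun a _ => hr a b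
  have hrow : ∀ a, ∑ b, (Real.negMulLog (r a b) + r a b * Real.log (∑ a, r a b)) ≤
      Real.negMulLog (∑ b, r a b) := fun a => by
    refine (sum_negMulLog_add_mul_log_le Finset.univ (fun b _ => hr a b) (fun b _ => hcol b)
      fun b _ h => h.trans_le (Finset.single_le_sum (fun a _ => hr a b) (Finset.mem_univ a))).trans
      (le_of_eq ?_)
    rw [Finset.sum_comm (f := fun b a => r a b), hsum, Real.log_one, mul_zero, add_zero]
  have hcross : ∑ a, ∑ b, r a b * Real.log (∑ a, r a b) =
      -∑ b, Real.negMulLog (∑ a, r a b) := by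
    rw [Finset.sum_comm, ← Finset.sum_neg_distrib]
    exact Finset.sum_congr rfl fun b _ => by rw [← Finset.sum_mul, Real.negMulLog]; ring
  have htotal := Finset.sum_le_sum fun a (_ : a ∈ Finset.univ) => hrow a
  simp only [Finset.sum_add_distrib] at htotal
  linarith

end FiniteEntropy

section BlockBound

theorem sum_sum_range_add_mul {M : Type*} [AddCommMonoid M] (g : ℕ → M) (m r : ℕ) :
    ∑ k ∈ Finset.range m, ∑ j ∈ Finset.range r, g (k + j * m) =
      ∑ i ∈ Finset.range (r * m), g i := by
  induction r with
  | zero => simp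
  | succ r ih =>
    simp only [Finset.sum_range_succ, Finset.sum_add_distrib, ih]
    rw [Nat.succ_mul, Finset.sum_range_add]
    simp only [add_comm]

variable {E : ℕ → ℕ → ℝ} {N m : ℕ} {C D : ℝ}

theorem le_sum_blocks_add
    (hsub : ∀ i a b, i + a + b ≤ N → E i (a + b) ≤ E i a + E (i + a) b + C)
    {k s t : ℕ} (h : k + s * m + t ≤ N) :
    E k (s * m + t) ≤ ∑ j ∈ Finset.range s, E (k + j * m) m + E (k + s * m) t + s * C := by
  induction s generalizing t with
  | zero => simp
  | succ s ih =>
    have hlen : (s + 1) * m = s * m + m := Nat.succ_mul s m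
    rw [hlen] at h
    have hfirst := ih (t := m + t) (by omega)
    have hlast := hsub (k + s * m) m t (by omega)
    rw [hlen, Finset.sum_range_succ, add_assoc (s * m), ← add_assoc k]
    push_cast
    linarith

/-- Averages over the `m` ways of cutting `[0, N)` into blocks of length `m`. -/
theorem mul_le_sum_blocks_add (hm : 1 ≤ m) (hN : 2 * m ≤ N) (hC : 0 ≤ C)
    (hsub : ∀ i a b, i + a + b ≤ N → E i (a + b) ≤ E i a + E (i + a) b + C)
    (hbd : ∀ i l, l ≤ 2 * m → |E i l| ≤ D) :
    m * E 0 N ≤ ∑ i ∈ Finset.range N, E i m + N * C + m * (4 * D + 2 * C) := by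
  obtain ⟨r, t, ht_lower, ht_upper, rfl⟩ : ∃ r t, m ≤ t ∧ t < 2 * m ∧ N = r * m + t := by
    have hdiv := Nat.div_add_mod' (N - m) m
    have hmod := Nat.mod_lt (N - m) (show 0 < m by omega)
    exact ⟨(N - m) / m, (N - m) % m + m, by omega, by omega, by omega⟩
  have hcut : ∀ k ∈ Finset.range m, E 0 (r * m + t) ≤
      ∑ j ∈ Finset.range r, E (k + j * m) m + (2 * D + C + r * C) := fun k hk => by
    rw [Finset.mem_range] at hk
    have hhead := hsub 0 k (r * m + (t - k)) (by omega)
    have hblocks := le_sum_blocks_add (m := m) hsub (k := k) (s := r) (t := t - k) (by omega)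
    rw [show k + (r * m + (t - k)) = r * m + t by omega, zero_add] at hhead
    have := (abs_le.1 (hbd 0 k (by omega))).2
    have := (abs_le.1 (hbd (k + r * m) (t - k) (by omega))).2
    linarith
  have hsum := Finset.sum_le_sum hcut
  rw [Finset.sum_add_distrib, sum_sum_range_add_mul (fun i => E i m)] at hsum
  simp only [Finset.sum_const, Finset.card_range, nsmul_eq_mul] at hsum
  have htail : -(2 * m * D) ≤ ∑ i ∈ Finset.range t, E (r * m + i) m := by
    have hD : 0 ≤ D := (abs_nonneg _).trans (hbd 0 0 (by omega))
    have h := Finset.card_nsmul_le_sum (Finset.range t) (fun i => E (r * m + i) m) (-D)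
      fun i _ => (abs_le.1 (hbd _ m (by omega))).1
    rw [Finset.card_range, nsmul_eq_mul] at h
    have : (t : ℝ) ≤ 2 * m := by exact_mod_cast ht_upper.le
    nlinarith
  have hmC : 0 ≤ (m : ℝ) * C := by positivity
  have htC : 0 ≤ (t : ℝ) * C := by positivity
  rw [Finset.sum_range_add]
  push_cast
  linarith

end BlockBound

section Windows

variable {A B : Type}

/-- The coordinates `x_i, …, x_{i+n-1}` of a sequence. -/
def window (i n : ℕ) (x : ℕ → A) : Fin n → A := fun j => x (i + j)

theorem shiftMap_iterate_apply (j : ℕ) (x : ℕ → A) (k : ℕ) : shiftMap^[j] x k = x (j + k) := by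
  induction j generalizing x with
  | zero => simp
  | succ j ih =>
    rw [Function.iterate_succ_apply, ih, shiftMap]
    congr 1
    omega

theorem window_shiftMap_iterate (i j n : ℕ) (x : ℕ → A) :
    window i n (shiftMap^[j] x) = window (j + i) n x := by
  funext k
  simp only [window, shiftMap_iterate_apply, add_assoc]

theorem wordOf_eq_ofFn_window (x : ℕ → A) (n : ℕ) : wordOf x n = List.ofFn (window 0 n x) :=
  congrArg List.ofFn (funext fun i => by rw [window, zero_add])

theorem genPot_eq (φ : List A → ℝ) (n : ℕ) :
    genPot φ n = fun x => φ (List.ofFn (window 0 n x)) :=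
  funext fun x => congrArg φ (wordOf_eq_ofFn_window x n)

theorem mem_cyl_iff {I : List A} {x : ℕ → A} : x ∈ cyl I ↔ wordOf x I.length = I := by
  conv_rhs => rw [← List.ofFn_get I, List.length_ofFn]
  exact funext_iff.symm.trans List.ofFn_injective.eq_iff.symm

theorem mem_cyl_ofFn {n : ℕ} {w : Fin n → A} {x : ℕ → A} :
    x ∈ cyl (List.ofFn w) ↔ window 0 n x = w := by
  rw [mem_cyl_iff, List.length_ofFn, wordOf_eq_ofFn_window, List.ofFn_injective.eq_iff]

theorem ofFn_window_add (x : ℕ → A) (i a b : ℕ) :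
    List.ofFn (window i (a + b) x) =
      List.ofFn (window i a x) ++ List.ofFn (window (i + a) b x) := by
  rw [← List.ofFn_fin_append]
  congr 1
  funext k
  refine Fin.addCases (fun k => ?_) (fun k => ?_) k
  · rw [Fin.append_left, window, window, Fin.val_castAdd]
  · rw [Fin.append_right, window, window, Fin.val_natAdd, add_assoc]

theorem length_wordOf (x : ℕ → A) (n : ℕ) : (wordOf x n).length = n :=
  List.length_ofFn

theorem wordOf_add (x : ℕ → A) (a b : ℕ) :
    wordOf x (a + b) = wordOf x a ++ wordOf (shiftMap^[a] x) b := by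
  simp only [wordOf_eq_ofFn_window, ofFn_window_add, window_shiftMap_iterate, zero_add, add_zero]

theorem window_surjective [Nonempty A] (i n : ℕ) : Function.Surjective (window (A := A) i n) :=
  fun w => ⟨fun k => if h : k - i < n then w ⟨k - i, h⟩ else Classical.arbitrary A, by
    funext j
    simp [window]⟩

theorem continuous_window [TopologicalSpace A] (i n : ℕ) : Continuous (window (A := A) i n) :=
  continuous_pi fun j => continuous_apply (i + (j : ℕ))

variable [MeasurableSpace A]

theorem measurable_window (i n : ℕ) : Measurable (window (A := A) i n) :=
  measurable_pi_iff.2 fun j => measurable_pi_apply (i + (j : ℕ))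

theorem measurable_shiftMap : Measurable (shiftMap (A := A)) :=
  measurable_pi_iff.2 fun j => measurable_pi_apply (j + 1)

theorem measurable_blockMap [MeasurableSpace B] {π : A → B} (hπ : Measurable π) :
    Measurable (blockMap π) :=
  measurable_pi_iff.2 fun j => hπ.comp (measurable_pi_apply j)

end Windows

section BlockProb

variable {A : Type} [MeasurableSpace A]

/-- The probability under `η` of reading the word `w` at position `i`. -/
noncomputable def blockProb (η : Measure (ℕ → A)) (i n : ℕ) (w : Fin n → A) : ℝ :=
  η.real (window i n ⁻¹' {w})

theorem blockProb_nonneg (η : Measure (ℕ → A)) (i n : ℕ) (w : Fin n → A) :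
    0 ≤ blockProb η i n w :=
  measureReal_nonneg

theorem blockProb_le_one (η : Measure (ℕ → A)) [IsProbabilityMeasure η] (i n : ℕ)
    (w : Fin n → A) : blockProb η i n w ≤ 1 :=
  measureReal_le_one

theorem exists_window_eq_of_ae {η : Measure (ℕ → A)} {i n : ℕ} {w : Fin n → A}
    (hw : 0 < blockProb η i n w) {p : (ℕ → A) → Prop} (hp : ∀ᵐ x ∂η, p x) :
    ∃ x, p x ∧ window i n x = w := by
  by_contra! h
  have hnull : η (window i n ⁻¹' {w}) = 0 := measure_eq_zero_iff_ae_notMem.2 (hp.mono h)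
  rw [blockProb, measureReal_def, hnull, ENNReal.toReal_zero] at hw
  exact hw.false

variable [MeasurableSingletonClass A]

theorem blockProb_map_shiftMap_iterate (η : Measure (ℕ → A)) (i j n : ℕ) (w : Fin n → A) :
    blockProb (η.map shiftMap^[j]) i n w = blockProb η (j + i) n w := by
  rw [blockProb, map_measureReal_apply (measurable_shiftMap.iterate j)
    (measurable_window i n (measurableSet_singleton w)), ← Set.preimage_comp]
  simp only [Function.comp_def, window_shiftMap_iterate]
  rfl

theorem blockProb_eq_of_invariant {μ : Measure (ℕ → A)} (h : μ.map shiftMap = μ) (i n : ℕ) :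
    blockProb μ i n = blockProb μ 0 n := by
  have hi : μ.map shiftMap^[i] = μ :=
    (MeasurePreserving.iterate ⟨measurable_shiftMap, h⟩ i).map_eq
  funext w
  conv_rhs => rw [← hi, blockProb_map_shiftMap_iterate, add_zero]

end BlockProb

section BlockSums

theorem sum_words_append {A M : Type*} [Fintype A] [AddCommMonoid M] (a b : ℕ)
    (F : (Fin (a + b) → A) → M) : ∑ w, F w = ∑ u, ∑ v, F (Fin.append u v) := by
  rw [← (Fin.appendEquiv a b).sum_comp, Fintype.sum_prod_type]
  rfl

variable {A B : Type} [Fintype A] [MeasurableSpace A] [MeasurableSingletonClass A]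

theorem measureReal_window_preimage (η : Measure (ℕ → A)) [IsFiniteMeasure η] (i n : ℕ)
    {γ : Type*} [DecidableEq γ] (g : (Fin n → A) → γ) (c : γ) :
    η.real {x | g (window i n x) = c} = ∑ w with g w = c, blockProb η i n w := by
  simp only [blockProb]
  rw [sum_measureReal_preimage_singleton _
    fun w _ => measurable_window i n (measurableSet_singleton w)]
  congr 1
  ext x
  simp

theorem integral_window (η : Measure (ℕ → A)) [IsFiniteMeasure η] (i n : ℕ)
    (F : (Fin n → A) → ℝ) : ∫ x, F (window i n x) ∂η = ∑ w, blockProb η i n w * F w := by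
  rw [← integral_map (f := F) (measurable_window i n).aemeasurable
    (measurable_of_finite F).aestronglyMeasurable, integral_fintype Integrable.of_finite]
  refine Finset.sum_congr rfl fun w _ => ?_
  rw [map_measureReal_apply (measurable_window i n) (measurableSet_singleton w), blockProb,
    smul_eq_mul]

theorem sum_blockProb (η : Measure (ℕ → A)) [IsProbabilityMeasure η] (i n : ℕ) :
    ∑ w, blockProb η i n w = 1 := by
  simpa using (integral_window η i n fun _ => 1).symm

theorem sum_blockProb_append_left (η : Measure (ℕ → A)) [IsFiniteMeasure η] (i a b : ℕ)
    (u : Fin a → A) : ∑ v, blockProb η i (a + b) (Fin.append u v) = blockProb η i a u := by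
  have h := measureReal_window_preimage η i (a + b) (fun w (k : Fin a) => w (Fin.castAdd b k)) u
  have hwin : ∀ x : ℕ → A, (fun k : Fin a => window i (a + b) x (Fin.castAdd b k)) =
      window i a x := fun _ => rfl
  rw [Finset.sum_filter, sum_words_append] at h
  simp only [hwin, Fin.append_left, Finset.sum_ite_irrel, Finset.sum_const_zero,
    Finset.sum_ite_eq', Finset.mem_univ, if_true] at h
  exact h.symm

theorem sum_blockProb_append_right (η : Measure (ℕ → A)) [IsFiniteMeasure η] (i a b : ℕ)
    (v : Fin b → A) :
    ∑ u, blockProb η i (a + b) (Fin.append u v) = blockProb η (i + a) b v := by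
  have h := measureReal_window_preimage η i (a + b) (fun w (k : Fin b) => w (Fin.natAdd a k)) v
  have hwin : ∀ x : ℕ → A, (fun k : Fin b => window i (a + b) x (Fin.natAdd a k)) =
      window (i + a) b x := fun x => by
    funext k
    simp [window, add_assoc]
  rw [Finset.sum_filter, sum_words_append] at h
  simp only [hwin, Fin.append_right, Finset.sum_ite_eq', Finset.mem_univ, if_true] at h
  exact h.symm

theorem blockProb_map_blockMap [MeasurableSpace B] [MeasurableSingletonClass B]
    (η : Measure (ℕ → A)) [IsFiniteMeasure η] (π : A → B) (i n : ℕ) (v : Fin n → B) :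
    blockProb (η.map (blockMap π)) i n v = ∑ w with π ∘ w = v, blockProb η i n w := by
  rw [blockProb, map_measureReal_apply (measurable_blockMap (measurable_of_finite π))
    (measurable_window i n (measurableSet_singleton v)),
    ← measureReal_window_preimage η i n (fun w => π ∘ w) v]
  rfl

end BlockSums

section FiniteAlphabet

variable {A : Type} [Finite A] [MeasurableSpace A] [MeasurableSingletonClass A]

theorem integrable_window (η : Measure (ℕ → A)) [IsFiniteMeasure η] (i n : ℕ)
    (F : (Fin n → A) → ℝ) : Integrable (fun x => F (window i n x)) η :=
  (Integrable.of_finite (f := F)).comp_measurable (measurable_window i n)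

theorem measurable_genPot (φ : List A → ℝ) (n : ℕ) : Measurable (genPot φ n) := by
  rw [genPot_eq]
  exact (measurable_of_finite fun w => φ (List.ofFn w)).comp (measurable_window 0 n)

theorem ae_window_iff {η : Measure (ℕ → A)} [IsFiniteMeasure η] {i n : ℕ}
    {p : (Fin n → A) → Prop} :
    (∀ᵐ x ∂η, p (window i n x)) ↔ ∀ w, 0 < blockProb η i n w → p w := by
  have := Fintype.ofFinite A
  refine ⟨fun h w hw => ?_, fun h => ?_⟩
  · obtain ⟨x, hx, rfl⟩ := exists_window_eq_of_ae hw h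
    exact hx
  · have hsum := measureReal_window_preimage η i n p False
    rw [Finset.sum_eq_zero fun w hw => ?_, measureReal_eq_zero_iff] at hsum
    · simpa [ae_iff] using hsum
    · have hpw : ¬p w := by simpa using hw
      exact le_antisymm (not_lt.1 fun hpos => hpw (h w hpos)) (blockProb_nonneg η i n w)

theorem blockProb_congr_of_le {η η' : Measure (ℕ → A)} [IsFiniteMeasure η] [IsFiniteMeasure η']
    {N : ℕ} (h : blockProb η 0 N = blockProb η' 0 N) {i n : ℕ} (hin : i + n ≤ N) :
    blockProb η i n = blockProb η' i n := by
  have := Fintype.ofFinite A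
  obtain ⟨k, rfl⟩ := Nat.exists_eq_add_of_le hin
  funext w
  rw [← zero_add i, ← sum_blockProb_append_right, ← sum_blockProb_append_right]
  refine Finset.sum_congr rfl fun u _ => ?_
  rw [← sum_blockProb_append_left η 0 (i + n) k, ← sum_blockProb_append_left η' 0 (i + n) k, h]

theorem measure_eq_of_blockProb_eq {μ μ' : Measure (ℕ → A)} [IsFiniteMeasure μ]
    [IsFiniteMeasure μ'] (h : ∀ n, blockProb μ 0 n = blockProb μ' 0 n) : μ = μ' := by
  have hwindow : ∀ n, μ.map (window 0 n) = μ'.map (window 0 n) := fun n => by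
    refine Measure.ext_of_measureReal_singleton fun w => ?_
    rw [map_measureReal_apply (measurable_window 0 n) (measurableSet_singleton w),
      map_measureReal_apply (measurable_window 0 n) (measurableSet_singleton w)]
    exact congrFun (h n) w
  refine IsProjectiveLimit.unique (P := fun I : Finset ℕ => μ'.map I.restrict) (fun I => ?_)
    fun _ => rfl
  change μ.map I.restrict = μ'.map I.restrict
  let g : (Fin (I.sup id + 1) → A) → (I → A) :=
    fun w j => w ⟨j, Nat.lt_succ_of_le (Finset.le_sup (f := id) j.2)⟩
  have hrestrict : (I.restrict : (ℕ → A) → (I → A)) = g ∘ window 0 (I.sup id + 1) := by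
    funext x j
    simp [g, window]
  rw [hrestrict, ← Measure.map_map (measurable_of_finite g) (measurable_window _ _),
    ← Measure.map_map (measurable_of_finite g) (measurable_window _ _), hwindow]

end FiniteAlphabet

section BlockPressure

variable {A : Type} [Fintype A] [MeasurableSpace A]

/-- The entropy of the random word read by `η` at the positions `i, …, i+n-1`. -/
noncomputable def blockEntropy (η : Measure (ℕ → A)) (i n : ℕ) : ℝ :=
  ∑ w, Real.negMulLog (blockProb η i n w)

/-- Entropy plus mean energy of the random word read by `η` at the positions `i, …, i+n-1`, where
`f` is the energy of a word. -/
noncomputable def blockPressure (f : List A → ℝ) (η : Measure (ℕ → A)) (i n : ℕ) : ℝ :=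
  ∑ w, (Real.negMulLog (blockProb η i n w) + blockProb η i n w * f (List.ofFn w))

theorem blockEntropy_nonneg (η : Measure (ℕ → A)) [IsProbabilityMeasure η] (i n : ℕ) :
    0 ≤ blockEntropy η i n :=
  Finset.sum_nonneg fun w _ =>
    Real.negMulLog_nonneg (blockProb_nonneg η i n w) (blockProb_le_one η i n w)

theorem exists_abs_blockPressure_le (f : List A → ℝ) (m : ℕ) :
    ∃ D, ∀ (η : Measure (ℕ → A)) [IsProbabilityMeasure η], ∀ i l, l ≤ m →
      |blockPressure f η i l| ≤ D := by
  refine ⟨∑ l ∈ Finset.range (m + 1), ∑ w : Fin l → A, (1 + |f (List.ofFn w)|),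
    fun η _ i l hl => ?_⟩
  refine le_trans ?_ (Finset.single_le_sum
    (f := fun l => ∑ w : Fin l → A, (1 + |f (List.ofFn w)|))
    (fun l _ => Finset.sum_nonneg fun w _ => by positivity) (Finset.mem_range_succ_iff.2 hl))
  refine (Finset.abs_sum_le_sum_abs _ _).trans (Finset.sum_le_sum fun w _ => ?_)
  have hp0 := blockProb_nonneg η i l w
  have hp1 := blockProb_le_one η i l w
  refine (abs_add_le _ _).trans (add_le_add ?_ ?_)
  · rw [abs_of_nonneg (Real.negMulLog_nonneg hp0 hp1)]
    linarith [Real.negMulLog_le_one_sub_self hp0]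
  · rw [abs_mul, abs_of_nonneg hp0]
    exact mul_le_of_le_one_left (abs_nonneg _) hp1

variable [MeasurableSingletonClass A]

theorem blockPressure_eq (f : List A → ℝ) (η : Measure (ℕ → A)) [IsFiniteMeasure η] (i n : ℕ) :
    blockPressure f η i n = blockEntropy η i n + ∫ x, f (List.ofFn (window i n x)) ∂η := by
  rw [integral_window η i n fun w => f (List.ofFn w), blockPressure, blockEntropy,
    Finset.sum_add_distrib]

theorem blockEntropy_add_le (η : Measure (ℕ → A)) [IsProbabilityMeasure η] (i a b : ℕ) :
    blockEntropy η i (a + b) ≤ blockEntropy η i a + blockEntropy η (i + a) b := by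
  have h := sum_negMulLog_prod_le
    (r := fun (u : Fin a → A) (v : Fin b → A) => blockProb η i (a + b) (Fin.append u v))
    (fun u v => blockProb_nonneg η i (a + b) _) (by rw [← sum_words_append, sum_blockProb])
  simpa only [blockEntropy, sum_blockProb_append_left, sum_blockProb_append_right,
    ← sum_words_append a b fun w => Real.negMulLog (blockProb η i (a + b) w)] using h

theorem blockPressure_add_le {f : List A → ℝ} {η : Measure (ℕ → A)} [IsProbabilityMeasure η]
    {i a b : ℕ} {C : ℝ}
    (hf : ∀ᵐ x ∂η, f (List.ofFn (window i (a + b) x)) ≤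
      f (List.ofFn (window i a x)) + f (List.ofFn (window (i + a) b x)) + C) :
    blockPressure f η i (a + b) ≤ blockPressure f η i a + blockPressure f η (i + a) b + C := by
  have hint : ∀ i n, Integrable (fun x => f (List.ofFn (window i n x))) η :=
    fun i n => integrable_window η i n fun w => f (List.ofFn w)
  have henergy := integral_mono_ae (hint i (a + b))
    (((hint i a).add (hint (i + a) b)).add (integrable_const C)) hf
  rw [integral_add' ((hint i a).add (hint (i + a) b)) (integrable_const C),
    integral_add' (hint i a) (hint (i + a) b), integral_const, probReal_univ, one_smul] at henergy
  simp only [blockPressure_eq]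
  linarith [blockEntropy_add_le η i a b]

end BlockPressure

section PressureRate

theorem intlog_eq_integral {Ω : Type*} [MeasurableSpace Ω] {μ : Measure Ω} {g : Ω → ℝ}
    (hg : ∀ᵐ x ∂μ, 0 < g x) (hint : Integrable (fun x => Real.log (g x)) μ) :
    intlog μ g = ((∫ x, Real.log (g x) ∂μ : ℝ) : EReal) := by
  have hneg : ∫⁻ x, (if g x ≤ 0 then (⊤ : ℝ≥0∞) else ENNReal.ofReal (-Real.log (g x))) ∂μ =
      ∫⁻ x, ENNReal.ofReal (-Real.log (g x)) ∂μ :=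
    lintegral_congr_ae (hg.mono fun x hx => if_neg hx.not_ge)
  rw [intlog, hneg, integral_eq_lintegral_pos_part_sub_lintegral_neg_part hint, EReal.coe_sub,
    EReal.coe_ennreal_toReal hint.lintegral_lt_top.ne,
    EReal.coe_ennreal_toReal (Integrable.lintegral_lt_top hint.fun_neg).ne]

theorem intlog_eq_bot {Ω : Type*} [MeasurableSpace Ω] {μ : Measure Ω} {g : Ω → ℝ}
    (hmeas : Measurable g) (hg : ¬ ∀ᵐ x ∂μ, 0 < g x) : intlog μ g = ⊥ := by
  have hneg : ∫⁻ x, (if g x ≤ 0 then (⊤ : ℝ≥0∞) else ENNReal.ofReal (-Real.log (g x))) ∂μ = ⊤ := by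
    by_contra h
    refine hg ((ae_lt_top (Measurable.ite (measurableSet_le hmeas measurable_const)
      measurable_const hmeas.log.neg.ennreal_ofReal) h).mono fun x hx => ?_)
    by_contra hx0
    simp [not_lt.1 hx0] at hx
  rw [intlog, hneg, EReal.coe_ennreal_top, EReal.sub_top]

variable {A : Type} [Fintype A] [MeasurableSpace A]

/-- The `n`-th term of the sequence whose `liminf` is `Φ_*(μ) + h_μ`. -/
noncomputable def pressureRate (X : Set (ℕ → A)) (μ : Measure (ℕ → A)) (φ : List A → ℝ) (n : ℕ) :
    EReal :=
  (((n : ℝ)⁻¹ : ℝ) : EReal) * intlog μ (genPot φ n) + ((Hblock X μ n / n : ℝ) : EReal)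

theorem Hblock_eq_blockEntropy {X : Set (ℕ → A)} {μ : Measure (ℕ → A)} (hX : ∀ᵐ x ∂μ, x ∈ X)
    (n : ℕ) : Hblock X μ n = blockEntropy μ 0 n := by
  have hmw : ∀ w : Fin n → A, mw X μ (List.ofFn w) = blockProb μ 0 n w := fun w =>
    congrArg ENNReal.toReal (measure_congr (hX.mono fun x hx => by
      change (x ∈ cyl (List.ofFn w) ∩ X) = (window 0 n x = w)
      simp only [Set.mem_inter_iff, mem_cyl_ofFn, hx, and_true]))
  simp only [Hblock, blockEntropy, hmw, Real.negMulLog_eq_neg, Finset.sum_neg_distrib]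

variable [MeasurableSingletonClass A]

theorem pressureRate_eq_blockPressure_div {X : Set (ℕ → A)} {μ : Measure (ℕ → A)}
    [IsFiniteMeasure μ] (hX : ∀ᵐ x ∂μ, x ∈ X) {φ : List A → ℝ} {n : ℕ}
    (hφ : ∀ᵐ x ∂μ, 0 < genPot φ n x) :
    pressureRate X μ φ n = ((blockPressure (Real.log ∘ φ) μ 0 n / n : ℝ) : EReal) := by
  have hint : Integrable (fun x => Real.log (genPot φ n x)) μ := by
    rw [genPot_eq]
    exact integrable_window μ 0 n fun w => Real.log (φ (List.ofFn w))
  rw [pressureRate, intlog_eq_integral hφ hint, Hblock_eq_blockEntropy hX, ← EReal.coe_mul,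
    ← EReal.coe_add, blockPressure_eq, genPot_eq]
  simp only [Function.comp_apply]
  congr 1
  ring

theorem pressureRate_eq_bot (X : Set (ℕ → A)) {μ : Measure (ℕ → A)} {φ : List A → ℝ} {n : ℕ}
    (hn : 1 ≤ n) (hφ : ¬ ∀ᵐ x ∂μ, 0 < genPot φ n x) : pressureRate X μ φ n = ⊥ := by
  rw [pressureRate, intlog_eq_bot (measurable_genPot φ n) hφ,
    EReal.coe_mul_bot_of_pos (by positivity), EReal.bot_add]

theorem tendsto_Hblock_div {X : Set (ℕ → A)} {μ : Measure (ℕ → A)} [IsProbabilityMeasure μ]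
    (hX : ∀ᵐ x ∂μ, x ∈ X) (hμ : μ.map shiftMap = μ) :
    Tendsto (fun n : ℕ => Hblock X μ n / n) atTop (𝓝 (ent X μ)) := by
  have hsub : Subadditive (Hblock X μ) := fun a b => by
    have h := blockEntropy_add_le μ 0 a b
    simpa only [Hblock_eq_blockEntropy hX, blockEntropy,
      blockProb_eq_of_invariant hμ (0 + a)] using h
  have hlim := hsub.tendsto_lim ⟨0, by
    rintro _ ⟨n, rfl⟩
    simp only [Hblock_eq_blockEntropy hX]
    exact div_nonneg (blockEntropy_nonneg μ 0 n) n.cast_nonneg⟩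
  rwa [ent, hlim.liminf_eq]

theorem PhiStar_add_ent {X : Set (ℕ → A)} {μ : Measure (ℕ → A)} [IsProbabilityMeasure μ]
    (hX : ∀ᵐ x ∂μ, x ∈ X) (hμ : μ.map shiftMap = μ) (φ : List A → ℝ) :
    PhiStar μ (genPot φ) + ((ent X μ : ℝ) : EReal) = liminf (pressureRate X μ φ) atTop := by
  have hent : Tendsto (fun n : ℕ => ((Hblock X μ n / n : ℝ) : EReal)) atTop
      (𝓝 ((ent X μ : ℝ) : EReal)) :=
    (continuous_coe_real_ereal.tendsto _).comp (tendsto_Hblock_div hX hμ)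
  refine le_antisymm ?_ ?_
  · rw [← hent.liminf_eq]
    exact EReal.le_liminf_add
  · rw [← hent.limsup_eq, PhiStar, add_comm]
    refine le_of_eq_of_le (congrArg (liminf · atTop) (funext fun n => add_comm _ _))
      (EReal.liminf_add_le ?_ ?_)
    · exact .inl (by rw [hent.limsup_eq]; exact EReal.coe_ne_bot _)
    · exact .inl (by rw [hent.limsup_eq]; exact EReal.coe_ne_top _)

theorem PhiStar_add_ent_sub {X : Set (ℕ → A)} {μ : Measure (ℕ → A)} [IsProbabilityMeasure μ]
    (hX : ∀ᵐ x ∂μ, x ∈ X) (hμ : μ.map shiftMap = μ) (φ : List A → ℝ) (c : ℝ) :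
    PhiStar μ (genPot φ) + ((ent X μ - c : ℝ) : EReal) =
      liminf (pressureRate X μ φ) atTop - c := by
  rw [EReal.coe_sub, ← add_sub_assoc, PhiStar_add_ent hX hμ]

theorem PhiStar_eq_liminf_sub_ent {X : Set (ℕ → A)} {μ : Measure (ℕ → A)}
    [IsProbabilityMeasure μ] (hX : ∀ᵐ x ∂μ, x ∈ X) (hμ : μ.map shiftMap = μ) (φ : List A → ℝ) :
    PhiStar μ (genPot φ) = liminf (pressureRate X μ φ) atTop - (ent X μ : EReal) := by
  rw [← PhiStar_add_ent hX hμ, EReal.add_sub_cancel_right]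

end PressureRate

section Language

variable {A : Type} {X : Set (ℕ → A)}

theorem lang_iff {I : List A} : Lang X I ↔ ∃ x ∈ X, wordOf x I.length = I := by
  simp only [Lang, Set.Nonempty, Set.mem_inter_iff, mem_cyl_iff, and_comm]

theorem lang_wordOf {x : ℕ → A} (hx : x ∈ X) (n : ℕ) : Lang X (wordOf x n) :=
  lang_iff.2 ⟨x, hx, by rw [length_wordOf]⟩

theorem mem_of_forall_lang_wordOf [TopologicalSpace A] [DiscreteTopology A] (hX : IsClosed X)
    {x : ℕ → A} (hx : ∀ n, Lang X (wordOf x n)) : x ∈ X := by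
  choose z hzX hz using fun n => lang_iff.1 (hx n)
  refine hX.mem_of_tendsto (b := atTop) (f := z) (tendsto_pi_nhds.2 fun k => ?_)
    (Eventually.of_forall fun n => hzX n)
  refine tendsto_nhds_of_eventually_eq ((eventually_gt_atTop k).mono fun n hn => ?_)
  have hword := hz n
  rw [length_wordOf] at hword
  exact congrFun (List.ofFn_injective hword) ⟨k, hn⟩

theorem shiftMap_iterate_mem (hX : shiftMap '' X ⊆ X) {x : ℕ → A} (hx : x ∈ X) (j : ℕ) :
    shiftMap^[j] x ∈ X :=
  (Set.mapsTo_iff_image_subset.2 hX).iterate j hx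

theorem lang_of_lang_append (hX : shiftMap '' X ⊆ X) {I J : List A} (h : Lang X (I ++ J)) :
    Lang X I ∧ Lang X J := by
  obtain ⟨x, hx, hword⟩ := lang_iff.1 h
  rw [List.length_append, wordOf_add] at hword
  obtain ⟨hI, hJ⟩ := List.append_inj hword (length_wordOf _ _)
  exact ⟨lang_iff.2 ⟨x, hx, hI⟩, lang_iff.2 ⟨_, shiftMap_iterate_mem hX hx _, hJ⟩⟩

/-- A word function extended by zero outside the language of `X`. This changes neither the
potential on `X` nor `psiProj`, and makes sub-multiplicativity hold for all pairs of words. -/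
noncomputable def langExtend (X : Set (ℕ → A)) (φ : List A → ℝ) : List A → ℝ :=
  Set.indicator {I | Lang X I} φ

theorem langExtend_of_lang {φ : List A → ℝ} {I : List A} (hI : Lang X I) :
    langExtend X φ I = φ I :=
  Set.indicator_of_mem (s := {I | Lang X I}) hI φ

theorem lang_of_langExtend_ne_zero {φ : List A → ℝ} {I : List A} (h : langExtend X φ I ≠ 0) :
    Lang X I :=
  Set.mem_of_indicator_ne_zero (s := {I | Lang X I}) h

theorem langExtend_nonneg {φ : List A → ℝ} (hφ : Submult X φ) (I : List A) :
    0 ≤ langExtend X φ I :=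
  Set.indicator_nonneg hφ.1 I

theorem genPot_langExtend {φ : List A → ℝ} {x : ℕ → A} (hx : x ∈ X) (n : ℕ) :
    genPot (langExtend X φ) n x = genPot φ n x :=
  langExtend_of_lang (lang_wordOf hx n)

theorem PhiStar_langExtend [MeasurableSpace A] {μ : Measure (ℕ → A)} (hX : ∀ᵐ x ∂μ, x ∈ X)
    (φ : List A → ℝ) : PhiStar μ (genPot (langExtend X φ)) = PhiStar μ (genPot φ) := by
  have hintlog : ∀ n, intlog μ (genPot (langExtend X φ) n) = intlog μ (genPot φ n) := fun n => by
    have hlintegral : ∀ F : ℝ → ℝ≥0∞, ∫⁻ x, F (genPot (langExtend X φ) n x) ∂μ =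
        ∫⁻ x, F (genPot φ n x) ∂μ := fun F =>
      lintegral_congr_ae (hX.mono fun x hx => congrArg F (genPot_langExtend hx n))
    rw [intlog, hlintegral fun t => ENNReal.ofReal (Real.log t),
      hlintegral fun t => if t ≤ 0 then ⊤ else ENNReal.ofReal (-Real.log t), intlog]
  simp only [PhiStar, hintlog]

/-- A nonnegative word function on the full language with `φ(IJ) ≤ K φ(I) φ(J)`. -/
structure IsSubmultWeight (K : ℝ) (φ : List A → ℝ) : Prop where
  const_pos : 0 < K
  nonneg : ∀ I, 0 ≤ φ I
  append_le : ∀ I J, φ (I ++ J) ≤ K * φ I * φ J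

theorem exists_isSubmultWeight_langExtend (hX : shiftMap '' X ⊆ X) {φ : List A → ℝ}
    (hφ : Submult X φ) : ∃ K, IsSubmultWeight K (langExtend X φ) := by
  obtain ⟨-, -, c, hc, happend⟩ := id hφ
  have hnonneg := langExtend_nonneg hφ
  refine ⟨c⁻¹, inv_pos.2 hc, hnonneg, fun I J => ?_⟩
  by_cases h : Lang X (I ++ J)
  · obtain ⟨hI, hJ⟩ := lang_of_lang_append hX h
    rw [langExtend_of_lang h, langExtend_of_lang hI, langExtend_of_lang hJ]
    exact happend I J h
  · rw [not_imp_comm.1 lang_of_langExtend_ne_zero h]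
    exact mul_nonneg (mul_nonneg (inv_pos.2 hc).le (hnonneg I)) (hnonneg J)

namespace IsSubmultWeight

variable {φ : List A → ℝ} {K : ℝ}

theorem pos_of_pos_append (h : IsSubmultWeight K φ) {I J : List A} (hIJ : 0 < φ (I ++ J)) :
    0 < φ I ∧ 0 < φ J := by
  have hprod : 0 < K * φ I * φ J := hIJ.trans_le (h.append_le I J)
  refine ⟨(h.nonneg I).lt_of_ne fun h0 => ?_, (h.nonneg J).lt_of_ne fun h0 => ?_⟩ <;>
    simp [← h0] at hprod

theorem log_append_le (h : IsSubmultWeight K φ) {I J : List A} (hIJ : 0 < φ (I ++ J)) :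
    Real.log (φ (I ++ J)) ≤ Real.log (φ I) + Real.log (φ J) + Real.log K := by
  obtain ⟨hI, hJ⟩ := h.pos_of_pos_append hIJ
  calc Real.log (φ (I ++ J)) ≤ Real.log (K * φ I * φ J) := Real.log_le_log hIJ (h.append_le I J)
    _ = Real.log (φ I) + Real.log (φ J) + Real.log K := by
      rw [Real.log_mul (mul_pos h.const_pos hI).ne' hJ.ne', Real.log_mul h.const_pos.ne' hI.ne']
      ring

theorem pos_window (h : IsSubmultWeight K φ) {x : ℕ → A} {N i n : ℕ} (hin : i + n ≤ N)
    (hx : 0 < genPot φ N x) : 0 < φ (List.ofFn (window i n x)) := by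
  obtain ⟨k, rfl⟩ := Nat.exists_eq_add_of_le hin
  rw [genPot, wordOf_add, wordOf_add] at hx
  have hpos := (h.pos_of_pos_append (h.pos_of_pos_append hx).1).2
  rwa [wordOf_eq_ofFn_window, window_shiftMap_iterate, add_zero] at hpos

theorem blockPressure_add_le [Fintype A] [MeasurableSpace A] [MeasurableSingletonClass A]
    (h : IsSubmultWeight K φ) {η : Measure (ℕ → A)} [IsProbabilityMeasure η] {i a b : ℕ}
    (hpos : ∀ᵐ x ∂η, 0 < φ (List.ofFn (window i (a + b) x))) :
    blockPressure (Real.log ∘ φ) η i (a + b) ≤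
      blockPressure (Real.log ∘ φ) η i a + blockPressure (Real.log ∘ φ) η (i + a) b +
        Real.log K := by
  refine _root_.blockPressure_add_le (hpos.mono fun x hx => ?_)
  rw [ofFn_window_add] at hx ⊢
  exact h.log_append_le hx

end IsSubmultWeight

end Language

section FiberSums

variable {A B : Type} [Fintype A]

/-- `ψ(J) = ∑_{πI = J} φ(I)` for every word `J`. -/
def IsFiberSum (π : A → B) (φ : List A → ℝ) (ψ : List B → ℝ) : Prop :=
  ∀ (n : ℕ) (v : Fin n → B), ψ (List.ofFn v) = ∑ w : Fin n → A with π ∘ w = v, φ (List.ofFn w)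

theorem isFiberSum_psiProj (X : Set (ℕ → A)) (π : A → B) (φ : List A → ℝ) :
    IsFiberSum π (langExtend X φ) (psiProj X π φ) := fun n v => by
  have hlen : ∀ (m : ℕ) (J : List B), J.length = m → psiProj X π φ J = ∑ w : Fin m → A,
      if List.map π (List.ofFn w) = J then langExtend X φ (List.ofFn w) else 0 := by
    rintro _ J rfl
    refine Finset.sum_congr rfl fun w _ => ?_
    simp only [langExtend, Set.indicator_apply, Set.mem_ofPred_eq, and_comm (a := Lang X _),
      ite_and]
  simp only [hlen n (List.ofFn v) List.length_ofFn, List.map_ofFn, List.ofFn_injective.eq_iff,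
    Finset.sum_filter]

namespace IsFiberSum

variable {π : A → B} {φ : List A → ℝ} {ψ : List B → ℝ}

theorem nonneg (h : IsFiberSum π φ ψ) (hφ : ∀ I, 0 ≤ φ I) (J : List B) : 0 ≤ ψ J := by
  rw [← List.ofFn_get J, h]
  exact Finset.sum_nonneg fun w _ => hφ _

theorem pos_map (h : IsFiberSum π φ ψ) (hφ : ∀ I, 0 ≤ φ I) {n : ℕ} {w : Fin n → A}
    (hw : 0 < φ (List.ofFn w)) : 0 < ψ (List.ofFn (π ∘ w)) := by
  rw [h]
  exact hw.trans_le (Finset.single_le_sum (f := fun w => φ (List.ofFn w)) (fun w _ => hφ _)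
    (Finset.mem_filter.2 ⟨Finset.mem_univ w, rfl⟩))

theorem append_le (h : IsFiberSum π φ ψ) {K : ℝ} (hφ : ∀ I J, φ (I ++ J) ≤ K * φ I * φ J)
    (I J : List B) : ψ (I ++ J) ≤ K * ψ I * ψ J := by
  rw [← List.ofFn_get I, ← List.ofFn_get J, ← List.ofFn_fin_append, h, h, h, Finset.sum_filter,
    sum_words_append]
  have hfiber : ∀ u v, π ∘ Fin.append u v = Fin.append I.get J.get ↔
      π ∘ u = I.get ∧ π ∘ v = J.get := fun u v => by
    simp only [funext_iff, Fin.forall_fin_add, Function.comp_apply, Fin.append_left,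
      Fin.append_right]
  simp only [hfiber, ite_and, Finset.sum_ite_irrel, Finset.sum_const_zero, ← Finset.sum_filter]
  rw [mul_assoc, Finset.sum_mul_sum, Finset.mul_sum]
  refine Finset.sum_le_sum fun u _ => ?_
  rw [Finset.mul_sum]
  refine Finset.sum_le_sum fun v _ => ?_
  rw [List.ofFn_fin_append, ← mul_assoc]
  exact hφ _ _

end IsFiberSum

theorem submult_psiProj {X : Set (ℕ → A)} (hX : X.Nonempty) (hshift : shiftMap '' X ⊆ X)
    (Y : Set (ℕ → B)) (π : A → B) {φ : List A → ℝ} (hφ : Submult X φ) :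
    Submult Y (psiProj X π φ) := by
  have hsum := isFiberSum_psiProj X π φ
  obtain ⟨K, hK⟩ := exists_isSubmultWeight_langExtend hshift hφ
  refine ⟨fun J _ => hsum.nonneg hK.nonneg J, ?_, K⁻¹, inv_pos.2 hK.const_pos, fun I J _ => ?_⟩
  · have hnil : Lang X [] := by
      obtain ⟨x, hx⟩ := hX
      exact lang_wordOf hx 0
    have h := hsum 0 ![]
    simpa [langExtend_of_lang hnil, hφ.2.1, Subsingleton.elim _ (![] : Fin 0 → B)] using h
  · rw [inv_inv]
    exact hsum.append_le hK.append_le I J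

end FiberSums

section UpperBound

variable {A B : Type} [Fintype A] [MeasurableSpace A] [MeasurableSingletonClass A]
  [MeasurableSpace B] [MeasurableSingletonClass B]
  {π : A → B} {φ : List A → ℝ} {ψ : List B → ℝ} {μ : Measure (ℕ → A)}

namespace IsFiberSum

theorem ae_genPot_pos [Finite B] (h : IsFiberSum π φ ψ) (hφ : ∀ I, 0 ≤ φ I) {n : ℕ}
    (hpos : ∀ᵐ x ∂μ, 0 < genPot φ n x) : ∀ᵐ y ∂μ.map (blockMap π), 0 < genPot ψ n y := by
  rw [ae_map_iff (measurable_blockMap (measurable_of_finite π)).aemeasurable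
    (measurableSet_lt measurable_const (measurable_genPot ψ n))]
  exact hpos.mono fun x hx => h.pos_map hφ hx

variable [Fintype B] [IsFiniteMeasure μ]

theorem blockPressure_le (h : IsFiberSum π φ ψ) (hφ : ∀ I, 0 ≤ φ I) {i n : ℕ}
    (hpos : ∀ᵐ x ∂μ, 0 < φ (List.ofFn (window i n x))) :
    blockPressure (Real.log ∘ φ) μ i n ≤
      blockPressure (Real.log ∘ ψ) (μ.map (blockMap π)) i n := by
  simp only [blockPressure, blockProb_map_blockMap, Function.comp_apply, h n]
  rw [← Finset.sum_fiberwise Finset.univ (fun w => π ∘ w)]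
  exact Finset.sum_le_sum fun v _ => sum_negMulLog_add_mul_log_le _
    (fun w _ => blockProb_nonneg μ i n w) (fun w _ => hφ _)
    fun w _ hw => (ae_window_iff (p := fun w => 0 < φ (List.ofFn w))).1 hpos w hw

theorem liminf_pressureRate_le (h : IsFiberSum π φ ψ) (hφ : ∀ I, 0 ≤ φ I) {X : Set (ℕ → A)}
    {Y : Set (ℕ → B)} (hX : ∀ᵐ x ∂μ, x ∈ X) (hY : ∀ᵐ y ∂μ.map (blockMap π), y ∈ Y) :
    liminf (pressureRate X μ φ) atTop ≤
      liminf (pressureRate Y (μ.map (blockMap π)) ψ) atTop := by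
  refine liminf_le_liminf ((eventually_ge_atTop 1).mono fun n hn => ?_)
  by_cases hpos : ∀ᵐ x ∂μ, 0 < genPot φ n x
  · rw [pressureRate_eq_blockPressure_div hX hpos,
      pressureRate_eq_blockPressure_div hY (h.ae_genPot_pos hφ hpos), EReal.coe_le_coe_iff]
    rw [genPot_eq] at hpos
    gcongr
    exact h.blockPressure_le hφ hpos
  · rw [pressureRate_eq_bot X hn hpos]
    exact bot_le

end IsFiberSum

end UpperBound

section Cesaro

variable {A B : Type} [MeasurableSpace A]

/-- The average of `η` along the first `N` steps of the shift. -/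
noncomputable def cesaro (η : Measure (ℕ → A)) (N : ℕ) : Measure (ℕ → A) :=
  (N : ℝ≥0∞)⁻¹ • ∑ j ∈ Finset.range N, η.map shiftMap^[j]

theorem isProbabilityMeasure_cesaro (η : Measure (ℕ → A)) [IsProbabilityMeasure η] {N : ℕ}
    (hN : 1 ≤ N) : IsProbabilityMeasure (cesaro η N) := ⟨by
  have hshift : ∀ j, IsProbabilityMeasure (η.map shiftMap^[j]) := fun j =>
    Measure.isProbabilityMeasure_map (measurable_shiftMap.iterate j).aemeasurable
  have hN' : (N : ℝ≥0∞) ≠ 0 := by exact_mod_cast (show N ≠ 0 by omega)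
  simp only [cesaro, Measure.smul_apply, Measure.finsetSum_apply, measure_univ, smul_eq_mul,
    Finset.sum_const, Finset.card_range, nsmul_eq_mul, mul_one]
  exact ENNReal.inv_mul_cancel hN' (ENNReal.natCast_ne_top N)⟩

theorem map_blockMap_cesaro [MeasurableSpace B] {π : A → B} (hπ : Measurable π)
    (η : Measure (ℕ → A)) (N : ℕ) :
    (cesaro η N).map (blockMap π) = cesaro (η.map (blockMap π)) N := by
  have hcomm : ∀ j, blockMap π ∘ shiftMap^[j] = shiftMap^[j] ∘ blockMap π := fun j => by
    funext x k
    simp only [Function.comp_apply, blockMap, shiftMap_iterate_apply]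
  have hb := measurable_blockMap hπ
  rw [cesaro, cesaro, Measure.map_smul, Measure.map_finset_sum hb.aemeasurable]
  congr 1
  refine Finset.sum_congr rfl fun j _ => ?_
  rw [Measure.map_map hb (measurable_shiftMap.iterate j),
    Measure.map_map (measurable_shiftMap.iterate j) hb, hcomm]

variable [MeasurableSingletonClass A]

theorem blockProb_cesaro (η : Measure (ℕ → A)) [IsFiniteMeasure η] (N i n : ℕ) (w : Fin n → A) :
    blockProb (cesaro η N) i n w = (∑ j ∈ Finset.range N, blockProb η (j + i) n w) / N := by
  simp only [← blockProb_map_shiftMap_iterate]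
  rw [blockProb, measureReal_def, cesaro, Measure.smul_apply, Measure.finsetSum_apply,
    smul_eq_mul, ENNReal.toReal_mul, ENNReal.toReal_inv, ENNReal.toReal_natCast,
    ENNReal.toReal_sum fun j _ => measure_ne_top _ _, inv_mul_eq_div]
  rfl

theorem abs_blockProb_cesaro_sub_le (η : Measure (ℕ → A)) [IsProbabilityMeasure η] {N : ℕ}
    (i n : ℕ) (w : Fin n → A) :
    |blockProb (cesaro η N) (i + 1) n w - blockProb (cesaro η N) i n w| ≤ 1 / N := by
  have htelescope : ∑ j ∈ Finset.range N,
      (blockProb η (j + (i + 1)) n w - blockProb η (j + i) n w) =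
        blockProb η (N + i) n w - blockProb η (0 + i) n w := by
    rw [← Finset.sum_range_sub fun j => blockProb η (j + i) n w]
    simp only [add_assoc, add_comm i 1]
  rw [blockProb_cesaro, blockProb_cesaro, ← sub_div, ← Finset.sum_sub_distrib, htelescope, abs_div,
    Nat.abs_cast]
  gcongr
  exact abs_sub_le_of_nonneg_of_le (blockProb_nonneg η _ n w) (blockProb_le_one η _ n w)
    (blockProb_nonneg η _ n w) (blockProb_le_one η _ n w)

theorem abs_blockProb_cesaro_sub_const_le (η : Measure (ℕ → A)) [IsProbabilityMeasure η]
    {N n : ℕ} (hN : 1 ≤ N) {w : Fin n → A} {c : ℝ} (hc0 : 0 ≤ c) (hc1 : c ≤ 1)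
    (h : ∀ j, j + n ≤ N → blockProb η j n w = c) :
    |blockProb (cesaro η N) 0 n w - c| ≤ n / N := by
  have hN' : (N : ℝ) ≠ 0 := by exact_mod_cast (show N ≠ 0 by omega)
  have hterm : ∀ j ∈ Finset.range N,
      |blockProb η j n w - c| ≤ if N < j + n then 1 else 0 := fun j _ => by
    split_ifs with hj
    · exact abs_sub_le_of_nonneg_of_le (blockProb_nonneg η j n w) (blockProb_le_one η j n w) hc0 hc1
    · rw [h j (not_lt.1 hj), sub_self, abs_zero]
  have hcard : ((Finset.range N).filter fun j => N < j + n).card ≤ n := by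
    have hsub : ((Finset.range N).filter fun j => N < j + n) ⊆ Finset.Ico (N - n) N := by
      intro j hj
      simp only [Finset.mem_filter, Finset.mem_range, Finset.mem_Ico] at hj ⊢
      omega
    exact (Finset.card_le_card hsub).trans (by rw [Nat.card_Ico]; omega)
  calc |blockProb (cesaro η N) 0 n w - c|
      = |∑ j ∈ Finset.range N, (blockProb η j n w - c)| / N := by
        rw [Finset.sum_sub_distrib, Finset.sum_const, Finset.card_range, nsmul_eq_mul,
          ← Nat.abs_cast N, ← abs_div, Nat.abs_cast, sub_div, mul_div_cancel_left₀ _ hN',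
          blockProb_cesaro]
        rfl
    _ ≤ (∑ j ∈ Finset.range N, if N < j + n then (1 : ℝ) else 0) / N := by
        gcongr
        exact (Finset.abs_sum_le_sum_abs _ _).trans (Finset.sum_le_sum hterm)
    _ ≤ n / N := by
        rw [Finset.sum_boole]
        gcongr

theorem sum_blockPressure_le_cesaro [Fintype A] (f : List A → ℝ) (η : Measure (ℕ → A))
    [IsFiniteMeasure η] (N n : ℕ) :
    ∑ j ∈ Finset.range N, blockPressure f η j n ≤ N * blockPressure f (cesaro η N) 0 n := by
  rcases N.eq_zero_or_pos with rfl | hN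
  · simp
  have hN' : (0 : ℝ) < N := by exact_mod_cast hN
  simp only [blockPressure, blockProb_cesaro, add_zero]
  rw [Finset.sum_comm, Finset.mul_sum]
  refine Finset.sum_le_sum fun w _ => ?_
  have hconcave := Real.concaveOn_negMulLog.le_map_sum (t := Finset.range N)
    (w := fun _ => (N : ℝ)⁻¹) (p := fun j => blockProb η j n w) (fun _ _ => by positivity)
    (by simp [hN'.ne']) (fun j _ => blockProb_nonneg η j n w)
  simp only [smul_eq_mul, ← Finset.mul_sum] at hconcave
  rw [inv_mul_le_iff₀ hN', inv_mul_eq_div] at hconcave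
  rw [Finset.sum_add_distrib, ← Finset.sum_mul, mul_add]
  refine add_le_add hconcave (le_of_eq ?_)
  field_simp

end Cesaro

section CesaroLimit

variable {A B : Type} [MeasurableSpace A]

/-- `μ` is the limit along `U` of the Cesàro averages `cesaro (η N) N`, in the sense of convergence
of all block probabilities. -/
structure IsCesaroLimit (U : Filter ℕ) (η : ℕ → Measure (ℕ → A)) (μ : Measure (ℕ → A)) :
    Prop where
  neBot : U.NeBot
  le_atTop : U ≤ atTop
  eventually_isProbabilityMeasure : ∀ᶠ N in U, IsProbabilityMeasure (η N)
  isProbabilityMeasure : IsProbabilityMeasure μ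
  tendsto_blockProb (i n : ℕ) (w : Fin n → A) :
    Tendsto (fun N => blockProb (cesaro (η N) N) i n w) U (𝓝 (blockProb μ i n w))

theorem exists_isCesaroLimit [Finite A] [TopologicalSpace A] [DiscreteTopology A] [BorelSpace A]
    {η : ℕ → Measure (ℕ → A)} (hη : ∀ᶠ N in atTop, IsProbabilityMeasure (η N)) :
    ∃ U μ, IsCesaroLimit U η μ := by
  have hcesaro : ∀ᶠ N in atTop, ∃ m : ProbabilityMeasure (ℕ → A),
      (m : Measure (ℕ → A)) = cesaro (η N) N := by
    filter_upwards [hη, eventually_ge_atTop 1] with N hprob hN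
    exact ⟨⟨_, isProbabilityMeasure_cesaro (η N) hN⟩, rfl⟩
  have : Nonempty (ProbabilityMeasure (ℕ → A)) :=
    let ⟨_, m, _⟩ := hcesaro.exists
    ⟨m⟩
  obtain ⟨m, hm⟩ := hcesaro.choice
  let U := Ultrafilter.of (atTop : Filter ℕ)
  have hU : (U : Filter ℕ) ≤ atTop := Ultrafilter.of_le atTop
  obtain ⟨μ, -, hμ⟩ := isCompact_univ.ultrafilter_le_nhds (U.map m) (by simp)
  refine ⟨U, μ, U.neBot, hU, hη.filter_mono hU, inferInstance, fun i n w => ?_⟩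
  have hclopen : IsClopen (window i n ⁻¹' {w} : Set (ℕ → A)) :=
    (isClopen_discrete {w}).preimage (continuous_window i n)
  refine Tendsto.congr' ((hm.filter_mono hU).mono fun N hN => ?_) (NNReal.tendsto_coe.2
    (ProbabilityMeasure.tendsto_measure_of_isClopen_of_tendsto (show Tendsto m U (𝓝 μ) from hμ)
      hclopen))
  change _ = blockProb (cesaro (η N) N) i n w
  rw [← hN]
  rfl

namespace IsCesaroLimit

variable {U : Filter ℕ} {η : ℕ → Measure (ℕ → A)} {μ : Measure (ℕ → A)}

theorem tendsto_blockPressure [Fintype A] (h : IsCesaroLimit U η μ) (f : List A → ℝ)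
    (i n : ℕ) :
    Tendsto (fun N => blockPressure f (cesaro (η N) N) i n) U (𝓝 (blockPressure f μ i n)) :=
  tendsto_finsetSum _ fun w _ =>
    ((Real.continuous_negMulLog.tendsto _).comp (h.tendsto_blockProb i n w)).add
      ((h.tendsto_blockProb i n w).mul_const _)

variable [MeasurableSingletonClass A]

theorem blockProb_eq_const (h : IsCesaroLimit U η μ) {n : ℕ} {w : Fin n → A} {c : ℝ} (hc0 : 0 ≤ c)
    (hc1 : c ≤ 1) (hc : ∀ᶠ N in U, ∀ j, j + n ≤ N → blockProb (η N) j n w = c) :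
    blockProb μ 0 n w = c := by
  have := h.neBot
  have hlim := ((h.tendsto_blockProb 0 n w).sub_const c).abs
  refine sub_eq_zero.1 (abs_nonpos_iff.1 (le_of_tendsto_of_tendsto hlim
    ((tendsto_const_div_atTop_nhds_zero_nat (n : ℝ)).mono_left h.le_atTop) ?_))
  filter_upwards [hc, h.eventually_isProbabilityMeasure, h.le_atTop (eventually_ge_atTop 1)]
    with N hcN hprob hN
  exact abs_blockProb_cesaro_sub_const_le (η N) hN hc0 hc1 hcN

theorem map_shiftMap [Finite A] (h : IsCesaroLimit U η μ) : μ.map shiftMap = μ := by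
  have := h.neBot
  have := h.isProbabilityMeasure
  refine measure_eq_of_blockProb_eq fun n => funext fun w => ?_
  rw [← Function.iterate_one shiftMap, blockProb_map_shiftMap_iterate, add_comm]
  have hlim := ((h.tendsto_blockProb (0 + 1) n w).sub (h.tendsto_blockProb 0 n w)).abs
  refine sub_eq_zero.1 (abs_nonpos_iff.1 (le_of_tendsto_of_tendsto hlim
    ((tendsto_const_div_atTop_nhds_zero_nat (1 : ℝ)).mono_left h.le_atTop) ?_))
  filter_upwards [h.eventually_isProbabilityMeasure] with N hprob
  exact abs_blockProb_cesaro_sub_le (η N) 0 n w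

theorem map_blockMap [Finite A] [MeasurableSpace B] [MeasurableSingletonClass B]
    (h : IsCesaroLimit U η μ) (π : A → B) :
    IsCesaroLimit U (fun N => (η N).map (blockMap π)) (μ.map (blockMap π)) := by
  have := Fintype.ofFinite A
  have hπ : Measurable π := measurable_of_finite π
  have hmap : ∀ ρ : Measure (ℕ → A), IsProbabilityMeasure ρ →
      IsProbabilityMeasure (ρ.map (blockMap π)) := fun ρ hρ =>
    Measure.isProbabilityMeasure_map (measurable_blockMap hπ).aemeasurable
  have := h.isProbabilityMeasure
  refine ⟨h.neBot, h.le_atTop, h.eventually_isProbabilityMeasure.mono fun N => hmap (η N),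
    hmap μ h.isProbabilityMeasure, fun i n v => ?_⟩
  rw [blockProb_map_blockMap]
  refine (tendsto_finsetSum _ fun w _ => h.tendsto_blockProb i n w).congr' ?_
  filter_upwards [h.eventually_isProbabilityMeasure, h.le_atTop (eventually_ge_atTop 1)]
    with N hprob hN
  have := isProbabilityMeasure_cesaro (η N) hN
  rw [← map_blockMap_cesaro hπ, blockProb_map_blockMap]

theorem mul_le_blockPressure_add [Fintype A] (h : IsCesaroLimit U η μ) {f : List A → ℝ}
    {a C : ℝ} (hC : 0 ≤ C)
    (hsub : ∀ᶠ N in U, ∀ i k l, i + k + l ≤ N → blockPressure f (η N) i (k + l) ≤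
      blockPressure f (η N) i k + blockPressure f (η N) (i + k) l + C)
    (ha : ∀ᶠ N in U, a * N ≤ blockPressure f (η N) 0 N) {n : ℕ} (hn : 1 ≤ n) :
    n * a ≤ blockPressure f μ 0 n + C := by
  have := h.neBot
  obtain ⟨D, hD⟩ := exists_abs_blockPressure_le (A := A) f (2 * n)
  have hlim : Tendsto (fun N : ℕ => blockPressure f (cesaro (η N) N) 0 n + C +
      (n * (4 * D + 2 * C)) / (N : ℝ)) U (𝓝 (blockPressure f μ 0 n + C + 0)) :=
    ((h.tendsto_blockPressure f 0 n).add_const C).add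
      ((tendsto_const_div_atTop_nhds_zero_nat _).mono_left h.le_atTop)
  rw [add_zero] at hlim
  refine ge_of_tendsto hlim ?_
  filter_upwards [hsub, ha, h.eventually_isProbabilityMeasure,
    h.le_atTop (eventually_ge_atTop (2 * n))] with N hsubN haN hprob hN
  have hN' : (0 : ℝ) < N := by exact_mod_cast (show 0 < N by omega)
  have hblocks := mul_le_sum_blocks_add hn hN hC hsubN (hD (η N))
  have hcesaro := sum_blockPressure_le_cesaro f (η N) N n
  have hna : n * (a * N) ≤ n * blockPressure f (η N) 0 N := by gcongr
  rw [← sub_le_iff_le_add', le_div_iff₀ hN']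
  linarith

end IsCesaroLimit

end CesaroLimit

section GibbsLift

variable {A B : Type} [MeasurableSpace A]

theorem exists_blockProb_eq [Fintype A] [Nonempty A] [MeasurableSingletonClass A] {n : ℕ}
    {p : (Fin n → A) → ℝ} (hp : ∀ w, 0 ≤ p w) (hsum : ∑ w, p w = 1) (i : ℕ) :
    ∃ η : Measure (ℕ → A), IsProbabilityMeasure η ∧ blockProb η i n = p := by
  let P := PMF.ofFintype (fun w => ENNReal.ofReal (p w))
    (by rw [← ENNReal.ofReal_sum_of_nonneg fun w _ => hp w, hsum, ENNReal.ofReal_one])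
  obtain ⟨x, hx⟩ := (window_surjective (A := A) i n).hasRightInverse
  have hxmeas := measurable_of_finite x
  refine ⟨P.toMeasure.map x, Measure.isProbabilityMeasure_map hxmeas.aemeasurable,
    funext fun w => ?_⟩
  have hpre : x ⁻¹' (window i n ⁻¹' {w}) = {w} := by
    rw [← Set.preimage_comp, hx.comp_eq_id, Set.preimage_id]
  rw [blockProb, map_measureReal_apply hxmeas (measurable_window i n (measurableSet_singleton w)),
    hpre, measureReal_def, PMF.toMeasure_apply_singleton _ _ (measurableSet_singleton w)]
  exact ENNReal.toReal_ofReal (hp w)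

/-- `η` distributes the `ν`-mass of every word of length `N` over its preimages proportionally to
`φ`: this is the equality case of `IsFiberSum.blockPressure_le` on the first `N` letters. -/
structure IsGibbsLift [MeasurableSpace B] [Fintype A] [Fintype B] (π : A → B) (φ : List A → ℝ)
    (ψ : List B → ℝ) (ν : Measure (ℕ → B)) (N : ℕ) (η : Measure (ℕ → A)) : Prop where
  isProbabilityMeasure : IsProbabilityMeasure η
  ae_pos : ∀ᵐ x ∂η, 0 < genPot φ N x
  blockProb_map : blockProb (η.map (blockMap π)) 0 N = blockProb ν 0 N
  blockPressure_eq :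
    blockPressure (Real.log ∘ φ) η 0 N = blockPressure (Real.log ∘ ψ) ν 0 N

variable [Fintype A] [MeasurableSingletonClass A]
  [Fintype B] [MeasurableSpace B] [MeasurableSingletonClass B]
  {π : A → B} {φ : List A → ℝ} {ψ : List B → ℝ} {ν : Measure (ℕ → B)} [IsProbabilityMeasure ν]

theorem IsFiberSum.exists_isGibbsLift [Nonempty A] (h : IsFiberSum π φ ψ) (hφ : ∀ I, 0 ≤ φ I)
    {N : ℕ} (hpos : ∀ᵐ y ∂ν, 0 < genPot ψ N y) : ∃ η, IsGibbsLift π φ ψ ν N η := by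
  let q : (Fin N → A) → ℝ := fun w => φ (List.ofFn w)
  let Q : (Fin N → B) → ℝ := fun v => ∑ w with π ∘ w = v, q w
  let p : (Fin N → A) → ℝ := fun w => q w * (blockProb ν 0 N (π ∘ w) / Q (π ∘ w))
  have hp : ∀ w, 0 ≤ p w := fun w => mul_nonneg (hφ _)
    (div_nonneg (blockProb_nonneg ν 0 N _) (Finset.sum_nonneg fun w _ => hφ _))
  have hQ : ∀ v, blockProb ν 0 N v ≠ 0 → Q v ≠ 0 := fun v hv => by
    rw [genPot_eq] at hpos
    have hψ := (ae_window_iff (p := fun v => 0 < ψ (List.ofFn v))).1 hpos v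
      ((blockProb_nonneg ν 0 N v).lt_of_ne' hv)
    rw [h] at hψ
    exact hψ.ne'
  have hfiber : ∀ v, ∀ w ∈ Finset.univ.filter fun w : Fin N → A => π ∘ w = v,
      p w = q w * (blockProb ν 0 N v / Q v) := fun v w hw => by
    rw [← (Finset.mem_filter.1 hw).2]
  have hmarginal : ∀ v, ∑ w with π ∘ w = v, p w = blockProb ν 0 N v := fun v => by
    rw [Finset.sum_congr rfl (hfiber v)]
    exact sum_mul_div_sum_eq (hQ v)
  obtain ⟨η, hη, hηp⟩ := exists_blockProb_eq hp (by
    rw [← Finset.sum_fiberwise Finset.univ (fun w => π ∘ w) p, Finset.sum_congr rfl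
      fun v _ => hmarginal v, sum_blockProb]) 0
  refine ⟨η, hη, ?_, ?_, ?_⟩
  · rw [genPot_eq, ae_window_iff (p := fun w => 0 < φ (List.ofFn w)), hηp]
    exact fun w hw => (hφ _).lt_of_ne' fun h0 => hw.ne' (by simp [p, q, h0])
  · funext v
    rw [blockProb_map_blockMap, hηp, hmarginal]
  · simp only [blockPressure, hηp, Function.comp_apply, h N]
    rw [← Finset.sum_fiberwise Finset.univ (fun w => π ∘ w)]
    refine Finset.sum_congr rfl fun v _ => ?_
    rw [Finset.sum_congr rfl fun w hw => by rw [hfiber v w hw]]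
    exact sum_negMulLog_add_mul_log_eq (hQ v)

end GibbsLift

section LowerBound

variable {A B : Type} [Fintype A] [MeasurableSpace A] [Fintype B] [MeasurableSpace B]
  {π : A → B} {φ : List A → ℝ} {ψ : List B → ℝ} {K : ℝ} {ν : Measure (ℕ → B)}

namespace IsGibbsLift

variable {N : ℕ} {η : Measure (ℕ → A)}

theorem blockProb_map_eq [MeasurableSingletonClass B] [IsFiniteMeasure ν]
    (h : IsGibbsLift π φ ψ ν N η) (hν : ν.map shiftMap = ν) {j n : ℕ} (hjn : j + n ≤ N) :
    blockProb (η.map (blockMap π)) j n = blockProb ν 0 n := by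
  have := h.isProbabilityMeasure
  rw [blockProb_congr_of_le h.blockProb_map hjn, blockProb_eq_of_invariant hν]

theorem blockProb_eq_zero (h : IsGibbsLift π φ ψ ν N η) (hφ : IsSubmultWeight K φ) {j n : ℕ}
    (hjn : j + n ≤ N) {w : Fin n → A} (hw : φ (List.ofFn w) = 0) : blockProb η j n w = 0 := by
  by_contra hne
  obtain ⟨x, hx, rfl⟩ := exists_window_eq_of_ae ((blockProb_nonneg η j n w).lt_of_ne' hne) h.ae_pos
  exact (hφ.pos_window hjn hx).ne' hw

theorem blockPressure_add_le [MeasurableSingletonClass A] (h : IsGibbsLift π φ ψ ν N η)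
    (hφ : IsSubmultWeight K φ) {i a b : ℕ} (hiab : i + a + b ≤ N) :
    blockPressure (Real.log ∘ φ) η i (a + b) ≤ blockPressure (Real.log ∘ φ) η i a +
      blockPressure (Real.log ∘ φ) η (i + a) b + |Real.log K| := by
  have := h.isProbabilityMeasure
  refine (hφ.blockPressure_add_le (h.ae_pos.mono fun x hx => ?_)).trans
    (by gcongr; exact le_abs_self _)
  exact hφ.pos_window (by rwa [← add_assoc]) hx

end IsGibbsLift

variable [MeasurableSingletonClass A]

theorem IsFiberSum.eventually_exists_isGibbsLift [Nonempty A] [MeasurableSingletonClass B]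
    [IsProbabilityMeasure ν] (h : IsFiberSum π φ ψ) (hφ : ∀ I, 0 ≤ φ I) {Y : Set (ℕ → B)}
    (hbot : liminf (pressureRate Y ν ψ) atTop ≠ ⊥) :
    ∀ᶠ N in atTop, ∃ η, IsGibbsLift π φ ψ ν N η := by
  filter_upwards [eventually_lt_of_lt_liminf hbot.bot_lt, eventually_ge_atTop 1] with N hlt hN
  exact h.exists_isGibbsLift hφ (by_contra fun hpos => hlt.ne' (pressureRate_eq_bot Y hN hpos))

namespace IsCesaroLimit

variable {U : Filter ℕ} {η : ℕ → Measure (ℕ → A)} {μ : Measure (ℕ → A)}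

theorem ae_genPot_pos_of_isGibbsLift (h : IsCesaroLimit U η μ)
    (hη : ∀ᶠ N in U, IsGibbsLift π φ ψ ν N (η N)) (hφ : IsSubmultWeight K φ) (n : ℕ) :
    ∀ᵐ x ∂μ, 0 < genPot φ n x := by
  have := h.isProbabilityMeasure
  rw [genPot_eq, ae_window_iff (p := fun w => 0 < φ (List.ofFn w))]
  refine fun w hw => (hφ.nonneg _).lt_of_ne' fun h0 => hw.ne' ?_
  exact h.blockProb_eq_const le_rfl zero_le_one
    (hη.mono fun N hN j hjn => hN.blockProb_eq_zero hφ hjn h0)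

variable [MeasurableSingletonClass B]

theorem map_blockMap_eq_of_isGibbsLift [IsProbabilityMeasure ν] (h : IsCesaroLimit U η μ)
    (hη : ∀ᶠ N in U, IsGibbsLift π φ ψ ν N (η N)) (hν : ν.map shiftMap = ν) :
    μ.map (blockMap π) = ν := by
  have hlim := h.map_blockMap π
  have := hlim.isProbabilityMeasure
  refine measure_eq_of_blockProb_eq fun n => funext fun v => hlim.blockProb_eq_const
    (blockProb_nonneg ν 0 n v) (blockProb_le_one ν 0 n v) (hη.mono fun N hN j hjn => ?_)
  rw [hN.blockProb_map_eq hν hjn]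

theorem liminf_pressureRate_le_of_isGibbsLift [IsFiniteMeasure ν] (h : IsCesaroLimit U η μ)
    (hη : ∀ᶠ N in U, IsGibbsLift π φ ψ ν N (η N)) (hφ : IsSubmultWeight K φ) {X : Set (ℕ → A)}
    {Y : Set (ℕ → B)} (hX : ∀ᵐ x ∂μ, x ∈ X) (hY : ∀ᵐ y ∂ν, y ∈ Y) :
    liminf (pressureRate Y ν ψ) atTop ≤ liminf (pressureRate X μ φ) atTop := by
  have := h.isProbabilityMeasure
  refine EReal.ge_of_forall_gt_iff_ge.1 fun a ha => ?_
  have hbound : ∀ᶠ N in U, a * N ≤ blockPressure (Real.log ∘ φ) (η N) 0 N := by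
    filter_upwards [hη, h.le_atTop (eventually_lt_of_lt_liminf ha),
      h.le_atTop (eventually_ge_atTop 1)] with N hN hlt hN1
    have hpos : ∀ᵐ y ∂ν, 0 < genPot ψ N y := by
      by_contra hpos
      simp [pressureRate_eq_bot Y hN1 hpos] at hlt
    rw [pressureRate_eq_blockPressure_div hY hpos, EReal.coe_lt_coe_iff,
      lt_div_iff₀ (by exact_mod_cast hN1)] at hlt
    rw [hN.blockPressure_eq]
    exact hlt.le
  have hlim : Tendsto (fun n : ℕ => ((a - |Real.log K| / n : ℝ) : EReal)) atTop
      (𝓝 (a : EReal)) := by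
    refine (continuous_coe_real_ereal.tendsto a).comp ?_
    simpa using (tendsto_const_div_atTop_nhds_zero_nat |Real.log K|).const_sub a
  rw [← hlim.liminf_eq]
  refine liminf_le_liminf ((eventually_ge_atTop 1).mono fun n hn => ?_)
  have hn' : (0 : ℝ) < n := by exact_mod_cast hn
  have hblock := h.mul_le_blockPressure_add (abs_nonneg _)
    (hη.mono fun N hN i k l => hN.blockPressure_add_le hφ) hbound hn
  rw [pressureRate_eq_blockPressure_div hX (h.ae_genPot_pos_of_isGibbsLift hη hφ n),
    EReal.coe_le_coe_iff, le_div_iff₀ hn', sub_mul, div_mul_cancel₀ _ hn'.ne']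
  linarith

end IsCesaroLimit

end LowerBound

section VariationalPrinciple

theorem mem_MInv_iff {A : Type} [MeasurableSpace A] {X : Set (ℕ → A)} (hX : MeasurableSet X)
    {μ : ProbabilityMeasure (ℕ → A)} :
    μ ∈ MInv X ↔ (μ : Measure (ℕ → A)).map shiftMap = μ ∧ ∀ᵐ x ∂(μ : Measure (ℕ → A)), x ∈ X :=
  and_congr_right fun _ => (mem_ae_iff_prob_eq_one hX).symm

theorem IsFiberSum.exists_le_liminf_pressureRate {A B : Type} [Fintype A] [Nonempty A]
    [TopologicalSpace A] [DiscreteTopology A] [MeasurableSpace A] [BorelSpace A] [Fintype B]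
    [MeasurableSpace B] [MeasurableSingletonClass B] {π : A → B} {φ : List A → ℝ} {ψ : List B → ℝ}
    (h : IsFiberSum π φ ψ) {K : ℝ} (hφ : IsSubmultWeight K φ) {X : Set (ℕ → A)} (hX : IsClosed X)
    (hsupp : ∀ I, φ I ≠ 0 → Lang X I) {Y : Set (ℕ → B)} (hY : MeasurableSet Y)
    {ν : ProbabilityMeasure (ℕ → B)} (hν : ν ∈ MInv Y)
    (hbot : liminf (pressureRate Y ν ψ) atTop ≠ ⊥) :
    ∃ μ ∈ MInv X, pushM π μ = ν ∧
      liminf (pressureRate Y ν ψ) atTop ≤ liminf (pressureRate X μ φ) atTop := by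
  rw [mem_MInv_iff hY] at hν
  obtain ⟨η, hη⟩ := (h.eventually_exists_isGibbsLift hφ.nonneg hbot).choice
  obtain ⟨U, μ, hμ⟩ := exists_isCesaroLimit (hη.mono fun N hN => hN.isProbabilityMeasure)
  have hηU := hη.filter_mono hμ.le_atTop
  have hμX : ∀ᵐ x ∂μ, x ∈ X := by
    filter_upwards [ae_all_iff.2 (hμ.ae_genPot_pos_of_isGibbsLift hηU hφ)] with x hx
    exact mem_of_forall_lang_wordOf hX fun n => hsupp _ (hx n).ne'
  exact ⟨⟨μ, hμ.isProbabilityMeasure⟩, (mem_MInv_iff hX.measurableSet).2 ⟨hμ.map_shiftMap, hμX⟩,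
    hμ.map_blockMap_eq_of_isGibbsLift hηU hν.1,
    hμ.liminf_pressureRate_le_of_isGibbsLift hηU hφ hμX hν.2⟩

theorem weighted_eq_states_stmt_5_general {A B : Type} [Fintype A] [TopologicalSpace A]
    [DiscreteTopology A] [MeasurableSpace A] [BorelSpace A] [Fintype B] [MeasurableSpace B]
    [MeasurableSingletonClass B] (X : Set (ℕ → A)) (Y : Set (ℕ → B)) (hX : IsSubshift X)
    (hY : MeasurableSet Y) (π : A → B) (φ : List A → ℝ) (hφ : Submult X φ)
    (ν : ProbabilityMeasure (ℕ → B)) (hν : ν ∈ MInv Y) :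
    Submult Y (psiProj X π φ) ∧
    (⨆ μ ∈ {μ : ProbabilityMeasure (ℕ → A) |
        μ ∈ MInv X ∧ pushM π μ = (ν : Measure (ℕ → B))},
        (PhiStar (μ : Measure (ℕ → A)) (genPot φ) +
          ((ent X (μ : Measure (ℕ → A)) - ent Y (ν : Measure (ℕ → B)) : ℝ) : EReal))) =
      PhiStar (ν : Measure (ℕ → B)) (genPot (psiProj X π φ)) := by
  refine ⟨submult_psiProj hX.1 hX.2.2 Y π hφ, ?_⟩
  have : Nonempty A := hX.1.elim fun x _ => ⟨x 0⟩
  obtain ⟨K, hK⟩ := exists_isSubmultWeight_langExtend hX.2.2 hφ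
  have hsum := isFiberSum_psiProj X π φ
  have hXmeas := hX.2.1.isClosed.measurableSet
  obtain ⟨hνinv, hνY⟩ := (mem_MInv_iff hY).1 hν
  have hpressure : ∀ μ ∈ MInv X, PhiStar (μ : Measure (ℕ → A)) (genPot φ) +
      ((ent X μ - ent Y ν : ℝ) : EReal) =
        liminf (pressureRate X μ (langExtend X φ)) atTop - (ent Y ν : EReal) := fun μ hμ => by
    obtain ⟨hμinv, hμX⟩ := (mem_MInv_iff hXmeas).1 hμ
    rw [← PhiStar_langExtend hμX, PhiStar_add_ent_sub hμX hμinv]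
  rw [PhiStar_eq_liminf_sub_ent hνY hνinv]
  refine le_antisymm (iSup₂_le fun μ ⟨hμ, hpush⟩ => ?_) ?_
  · rw [hpressure μ hμ]
    rw [← hpush] at hνY ⊢
    exact EReal.sub_le_sub
      (hsum.liminf_pressureRate_le hK.nonneg ((mem_MInv_iff hXmeas).1 hμ).2 hνY) le_rfl
  · by_cases hbot : liminf (pressureRate Y ν (psiProj X π φ)) atTop = ⊥
    · simp only [hbot, EReal.bot_sub, bot_le]
    obtain ⟨μ, hμ, hpush, hle⟩ := hsum.exists_le_liminf_pressureRate hK hX.2.1.isClosed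
      (fun I => lang_of_langExtend_ne_zero) hY hν hbot
    exact le_iSup₂_of_le μ ⟨hμ, hpush⟩ (hpressure μ hμ ▸ EReal.sub_le_sub hle le_rfl)

end VariationalPrinciple

/-- Proposition 3.3(i) / `pro-2.2`(i): relativized variational principle.
`ψ(J) = Σ_{πI = J} φ(I)` is sub-multiplicative on `L(Y)` and
`sup{Φ_*(μ) + h_μ(σ_X) − h_ν(σ_Y) : μ∘π⁻¹ = ν} = Ψ_*(ν)`. -/
theorem weighted_eq_states_stmt_5 {A B : Type}
    [Fintype A] [TopologicalSpace A] [DiscreteTopology A] [MeasurableSpace A] [BorelSpace A]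
    [Fintype B] [TopologicalSpace B] [DiscreteTopology B] [MeasurableSpace B] [BorelSpace B]
    (X : Set (ℕ → A)) (Y : Set (ℕ → B)) (hX : IsSubshift X) (hY : IsSubshift Y)
    (π : A → B) (hπ : blockMap π '' X = Y)
    (φ : List A → ℝ) (hφ : Submult X φ)
    (ν : ProbabilityMeasure (ℕ → B)) (hν : ν ∈ MInv Y) :
    Submult Y (psiProj X π φ) ∧
    (⨆ μ ∈ {μ : ProbabilityMeasure (ℕ → A) |
        μ ∈ MInv X ∧ pushM π μ = (ν : Measure (ℕ → B))},
        (PhiStar (μ : Measure (ℕ → A)) (genPot φ) +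
          ((ent X (μ : Measure (ℕ → A)) - ent Y (ν : Measure (ℕ → B)) : ℝ) : EReal))) =
      PhiStar (ν : Measure (ℕ → B)) (genPot (psiProj X π φ)) :=
  weighted_eq_states_stmt_5_general X Y hX hY.2.1.isClosed.measurableSet π φ hφ ν hν
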